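/- A closed embedded surface in a simply connected closed 3-manifold separates it: let M be a nonempty compact, Hausdorff, second countable, connected topological space locally homeomorphic to Euclidean 3-space that is simply connected, and let N ⊆ M be a nonempty closed subset which, with the subspace topology, is a compact connected 2-manifold (Hausdorff, second countable, locally homeomorphic to Euclidean 2-space). Then the complement M \ N is disconnected. -/

import Mathlib

/-!
Near each of its points the hypersurface `N` is an embedded cube `D` in Euclidean space. A chain
whose boundary is, away from the edge of `D`, the fundamental chain of `D` defines a function that
is locally constant off `D`: its mod 2 degree at a point. If this function did not take both values
near an interior point `q` of `D`, the fundamental chain of `D` would be homologous, near `D`, to a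
chain avoiding a neighbourhood of `q`, although its degree at `q`, computed in the parametrization,
is `1`. Conversely, a function `f` that is locally constant off `D` cuts the fundamental chain of a
small cube around `q` into two pieces, and their interface, obtained by capping with the coboundary
of `f`, is a chain near `D`. If its degree at `q` is `0`, it bounds near `D`, up to a chain avoiding
a neighbourhood of `q`; correcting the pieces accordingly shows that `f` is constant near `q`. As
these degrees add modulo 2, two functions taking both values near `q` differ by a constant near `q`.

So `N` has two sides locally, and the functions distinguishing them form a double cover of `M`. It
is trivial as `M` is simply connected, hence there is such a function on the whole of `M`; it is
locally constant off `N` without being constant there.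

The chains are spanned by arbitrary tuples of points, of small diameter, so that no triangulation
or approximation of `N` is needed.
-/

noncomputable section

/-- Mod 2 chains on ordered tuples of points, including the empty tuple (augmented complex). -/
abbrev TupleChain (X : Type*) := List X →₀ ZMod 2

namespace TupleChain

open Finsupp

variable {α X Y Z ι : Type*}

/-- The mod 2 chain consisting of one cell `l`, here a tuple or a pair of tuples. -/
abbrev tup (l : α) : α →₀ ZMod 2 := single l 1

theorem two_zsmul_eq_zero {V : Type*} [AddCommGroup V] [Module (ZMod 2) V] (x : V) :
    (2 : ℤ) • x = 0 := by
  rw [two_zsmul, ZModModule.add_self]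

theorem hom_ext {V : Type*} [AddCommMonoid V] [Module (ZMod 2) V]
    {S T : (α →₀ ZMod 2) →ₗ[ZMod 2] V} (h : ∀ l, S (tup l) = T (tup l)) : S = T := by
  apply Finsupp.lhom_ext'
  intro l
  ext
  simpa using h l

/-- The space of chains supported in `s`. -/
abbrev on (s : Set α) : Submodule (ZMod 2) (α →₀ ZMod 2) := supported (ZMod 2) (ZMod 2) s

theorem tup_mem_on {s : Set α} {l : α} (h : l ∈ s) : tup l ∈ on s :=
  single_mem_supported _ _ h

theorem on_mono {s t : Set α} (h : s ⊆ t) {c : α →₀ ZMod 2} (hc : c ∈ on s) : c ∈ on t :=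
  supported_mono h hc

theorem mem_on_inter {s t : Set α} {c : α →₀ ZMod 2} (hs : c ∈ on s) (ht : c ∈ on t) :
    c ∈ on (s ∩ t) := by
  rw [on, supported_inter]
  exact ⟨hs, ht⟩

theorem map_mem_of_on {V : Type*} [AddCommMonoid V] [Module (ZMod 2) V] {s : Set α}
    {t : Submodule (ZMod 2) V}
    (T : (α →₀ ZMod 2) →ₗ[ZMod 2] V) (h : ∀ l ∈ s, T (tup l) ∈ t) {c : α →₀ ZMod 2}
    (hc : c ∈ on s) : T c ∈ t := by
  rw [on, supported_eq_span_single] at hc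
  have : Submodule.span (ZMod 2) ((fun l : α => single l (1 : ZMod 2)) '' s) ≤ t.comap T := by
    rw [Submodule.span_le]
    rintro _ ⟨l, hl, rfl⟩
    exact h l hl
  exact this hc

theorem eq_of_on {V : Type*} [AddCommMonoid V] [Module (ZMod 2) V] {s : Set α}
    (S T : (α →₀ ZMod 2) →ₗ[ZMod 2] V) (h : ∀ l ∈ s, S (tup l) = T (tup l)) {c : α →₀ ZMod 2}
    (hc : c ∈ on s) : S c = T c := by
  rw [on, supported_eq_span_single] at hc
  refine LinearMap.eqOn_span (f := S) (g := T) ?_ hc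
  rintro _ ⟨l, hl, rfl⟩
  exact h l hl

theorem eq_zero_of_on {V : Type*} [AddCommMonoid V] [Module (ZMod 2) V] {s : Set α}
    (T : (α →₀ ZMod 2) →ₗ[ZMod 2] V) (h : ∀ l ∈ s, T (tup l) = 0) {c : α →₀ ZMod 2}
    (hc : c ∈ on s) : T c = 0 :=
  eq_of_on T 0 h hc

/-- Prepend a vertex to all tuples. -/
def cons (v : X) : TupleChain X →ₗ[ZMod 2] TupleChain X := lmapDomain _ _ (List.cons v)

@[simp] theorem cons_tup (v : X) (l : List X) : cons v (tup l) = tup (v :: l) := by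
  simp [cons]

/-- The sum of the tuples obtained by omitting one entry. -/
def bdryTup : List X → TupleChain X
  | [] => 0
  | v :: l => tup l + cons v (bdryTup l)

/-- The (augmented) boundary operator. -/
def bdry : TupleChain X →ₗ[ZMod 2] TupleChain X := linearCombination (ZMod 2) bdryTup

@[simp] theorem bdry_nil : bdry (tup ([] : List X)) = 0 := by simp [bdry, bdryTup]

@[simp] theorem bdry_tup_cons (v : X) (l : List X) :
    bdry (tup (v :: l)) = tup l + cons v (bdry (tup l)) := by
  simp [bdry, bdryTup]

theorem bdry_cons (v : X) (c : TupleChain X) : bdry (cons v c) = c + cons v (bdry c) := by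
  have : bdry ∘ₗ cons v = LinearMap.id + cons v ∘ₗ bdry := hom_ext fun l => by simp
  exact LinearMap.congr_fun this c

@[simp] theorem bdry_bdry (c : TupleChain X) : bdry (bdry c) = 0 := by
  have : bdry ∘ₗ bdry = (0 : TupleChain X →ₗ[ZMod 2] TupleChain X) := hom_ext fun l => by
    induction l with
    | nil => simp
    | cons v l ih =>
      simp only [LinearMap.comp_apply, LinearMap.zero_apply] at ih
      simp [bdry_cons, ih, ZModModule.add_self]
  exact LinearMap.congr_fun this c

/-- The chain map induced by a map of vertices. -/
def push (g : X → Y) : TupleChain X →ₗ[ZMod 2] TupleChain Y := lmapDomain _ _ (List.map g)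

@[simp] theorem push_tup (g : X → Y) (l : List X) : push g (tup l) = tup (l.map g) := by
  simp [push]

theorem push_cons (g : X → Y) (v : X) (c : TupleChain X) :
    push g (cons v c) = cons (g v) (push g c) := by
  have : push g ∘ₗ cons v = cons (g v) ∘ₗ push g := hom_ext fun l => by simp
  exact LinearMap.congr_fun this c

theorem bdry_push (g : X → Y) (c : TupleChain X) : bdry (push g c) = push g (bdry c) := by
  have : bdry ∘ₗ push g = push g ∘ₗ bdry := hom_ext fun l => by
    induction l with
    | nil => simp
    | cons v l ih =>
      simp only [LinearMap.comp_apply, push_tup] at ih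
      simp [push_cons, ih]
  exact LinearMap.congr_fun this c

theorem push_push (g : X → Y) (h : Y → Z) (c : TupleChain X) :
    push h (push g c) = push (h ∘ g) c := by
  have : push h ∘ₗ push g = push (h ∘ g) := hom_ext fun l => by simp
  exact LinearMap.congr_fun this c

theorem push_id (c : TupleChain X) : push (fun x => x) c = c := by
  have : push (fun x : X => x) = LinearMap.id := hom_ext fun l => by simp
  exact LinearMap.congr_fun this c

/-- The cap product with the `0`-cochain `a`: each tuple is multiplied by the value of `a` at its
first vertex. -/
def cap (a : X → ZMod 2) : TupleChain X →ₗ[ZMod 2] TupleChain X :=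
  linearCombination (ZMod 2) fun l => (l.head?.elim 0 a) • tup l

@[simp] theorem cap_nil (a : X → ZMod 2) : cap a (tup []) = 0 := by simp [cap]

@[simp] theorem cap_tup_cons (a : X → ZMod 2) (v : X) (l : List X) :
    cap a (tup (v :: l)) = a v • tup (v :: l) := by simp [cap]

theorem cap_cons (a : X → ZMod 2) (v : X) (c : TupleChain X) :
    cap a (cons v c) = a v • cons v c := by
  have : cap a ∘ₗ cons v = a v • cons v := hom_ext fun l => by
    simp only [LinearMap.comp_apply, cons_tup, cap_tup_cons, LinearMap.smul_apply]
  exact LinearMap.congr_fun this c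

theorem cap_add_apply (a b : X → ZMod 2) (c : TupleChain X) :
    cap (a + b) c = cap a c + cap b c := by
  have : cap (a + b) = cap a + cap b := hom_ext fun l => by
    cases l with
    | nil => simp only [cap_nil, LinearMap.add_apply, add_zero]
    | cons v l => simp only [cap_tup_cons, LinearMap.add_apply, Pi.add_apply, add_smul]
  exact LinearMap.congr_fun this c

theorem cap_push (g : X → Y) (a : Y → ZMod 2) (c : TupleChain X) :
    cap a (push g c) = push g (cap (a ∘ g) c) := by
  have : cap a ∘ₗ push g = push g ∘ₗ cap (a ∘ g) := hom_ext fun l => by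
    cases l with
    | nil => simp only [LinearMap.comp_apply, push_tup, List.map_nil, cap_nil, map_zero]
    | cons v l =>
      simp only [LinearMap.comp_apply, push_tup, List.map_cons, cap_tup_cons, map_smul,
        Function.comp_apply]
  exact LinearMap.congr_fun this c

/-- The cap product with the coboundary of `a`, as the commutator of `cap a` with `bdry`. -/
def dcap (a : X → ZMod 2) : TupleChain X →ₗ[ZMod 2] TupleChain X :=
  bdry ∘ₗ cap a + cap a ∘ₗ bdry

theorem dcap_apply (a : X → ZMod 2) (c : TupleChain X) :
    dcap a c = bdry (cap a c) + cap a (bdry c) := rfl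

theorem bdry_cap (a : X → ZMod 2) (c : TupleChain X) :
    bdry (cap a c) = dcap a c + cap a (bdry c) := by
  rw [dcap_apply, add_assoc, ZModModule.add_self, add_zero]

@[simp] theorem dcap_nil (a : X → ZMod 2) : dcap a (tup []) = 0 := by
  simp only [dcap_apply, cap_nil, bdry_nil, map_zero, add_zero]

theorem dcap_tup_cons (a : X → ZMod 2) (v : X) (l : List X) :
    dcap a (tup (v :: l)) = a v • tup l + cap a (tup l) := by
  simp only [dcap_apply, cap_tup_cons, map_smul, bdry_tup_cons, map_add, cap_cons, smul_add]
  rw [add_assoc, add_comm (cap a (tup l)), ← add_assoc (a v • (cons v) _), ZModModule.add_self,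
    zero_add]

@[simp] theorem dcap_tup_cons_cons (a : X → ZMod 2) (v w : X) (l : List X) :
    dcap a (tup (v :: w :: l)) = (a v + a w) • tup (w :: l) := by
  simp only [dcap_tup_cons, cap_tup_cons, add_smul]

@[simp] theorem dcap_tup_singleton (a : X → ZMod 2) (v : X) :
    dcap a (tup [v]) = a v • tup [] := by
  simp only [dcap_tup_cons, cap_nil, add_zero]

theorem bdry_dcap (a : X → ZMod 2) (c : TupleChain X) : bdry (dcap a c) = dcap a (bdry c) := by
  simp [dcap_apply]

theorem dcap_push (g : X → Y) (a : Y → ZMod 2) (c : TupleChain X) :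
    dcap a (push g c) = push g (dcap (a ∘ g) c) := by
  simp only [dcap_apply, cap_push, bdry_push, map_add]

theorem dcap_add_apply (a b : X → ZMod 2) (c : TupleChain X) :
    dcap (a + b) c = dcap a c + dcap b c := by
  simp only [dcap_apply, cap_add_apply, map_add]
  abel

/-- The prism over a tuple: the sum of all tuples that switch from `g` to `h` at one vertex, whose
two images both occur. -/
def prismTup (g h : X → Y) : List X → TupleChain Y
  | [] => 0
  | v :: l => tup (g v :: h v :: l.map h) + cons (g v) (prismTup g h l)

/-- The prism operator, a chain homotopy between `push g` and `push h`. -/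
def prism (g h : X → Y) : TupleChain X →ₗ[ZMod 2] TupleChain Y :=
  linearCombination (ZMod 2) (prismTup g h)

@[simp] theorem prism_nil (g h : X → Y) : prism g h (tup []) = 0 := by simp [prism, prismTup]

@[simp] theorem prism_tup_cons (g h : X → Y) (v : X) (l : List X) :
    prism g h (tup (v :: l)) = tup (g v :: h v :: l.map h) + cons (g v) (prism g h (tup l)) := by
  simp [prism, prismTup]

theorem prism_cons (g h : X → Y) (v : X) (c : TupleChain X) :
    prism g h (cons v c) = cons (g v) (cons (h v) (push h c)) + cons (g v) (prism g h c) := by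
  have : prism g h ∘ₗ cons v =
      cons (g v) ∘ₗ cons (h v) ∘ₗ push h + cons (g v) ∘ₗ prism g h := hom_ext fun l => by
    simp
  exact LinearMap.congr_fun this c

theorem bdry_prism (g h : X → Y) (c : TupleChain X) :
    bdry (prism g h c) = push g c + push h c + prism g h (bdry c) := by
  have : bdry ∘ₗ prism g h = push g + push h + prism g h ∘ₗ bdry := hom_ext fun l => by
    induction l with
    | nil => simp [ZModModule.add_self]
    | cons v l ih =>
      simp only [LinearMap.comp_apply, LinearMap.add_apply, push_tup] at ih
      simp only [LinearMap.comp_apply, LinearMap.add_apply, map_add,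
        bdry_cons, ih, prism_cons, ← cons_tup, bdry_push, ← push_tup, push_cons]
      abel_nf
      simp only [two_zsmul_eq_zero, zero_add]
  exact LinearMap.congr_fun this c

theorem add_bdry_push_add_prism (g : Y → X) (h : X → Y) (w : TupleChain Y) (c : TupleChain X) :
    c + bdry (push g w + prism (fun v => v) (g ∘ h) c) =
      push g (push h c + bdry w) + prism (fun v => v) (g ∘ h) (bdry c) := by
  rw [map_add, bdry_prism, bdry_push, push_id, map_add, push_push]
  abel_nf
  simp only [two_zsmul_eq_zero, zero_add]

/-- Tuples with all vertices in `A`. -/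
def within (A : Set X) : Set (List X) := {l | ∀ v ∈ l, v ∈ A}

/-- Tuples of diameter at most `ε`. -/
def small [PseudoMetricSpace X] (ε : ℝ) : Set (List X) :=
  {l | ∀ v ∈ l, ∀ w ∈ l, dist v w ≤ ε}

/-- Tuples of length `n`. -/
def len (X : Type*) (n : ℕ) : Set (List X) := {l | l.length = n}

/-- A family of tuples closed under passing to tuples with fewer vertices. -/
def IsHereditary (s : Set (List X)) : Prop := ∀ l ∈ s, ∀ l', l'.Sublist l → l' ∈ s

theorem isHereditary_within (A : Set X) : IsHereditary (within A) :=
  fun _ hl _ h v hv => hl v (h.subset hv)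

theorem isHereditary_small [PseudoMetricSpace X] (ε : ℝ) :
    IsHereditary (small ε : Set (List X)) :=
  fun _ hl _ h v hv w hw => hl v (h.subset hv) w (h.subset hw)

theorem within_mono {A B : Set X} (h : A ⊆ B) : within A ⊆ within B := fun _ hl v hv => h (hl v hv)

theorem small_mono [PseudoMetricSpace X] {ε δ : ℝ} (h : ε ≤ δ) :
    (small ε : Set (List X)) ⊆ small δ :=
  fun _ hl v hv w hw => (hl v hv w hw).trans h

theorem cons_mem_on {s t : Set (List X)} {v : X} (h : ∀ l ∈ s, v :: l ∈ t) {c : TupleChain X}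
    (hc : c ∈ on s) : cons v c ∈ on t :=
  map_mem_of_on _ (fun l hl => by rw [cons_tup]; exact tup_mem_on (h l hl)) hc

theorem bdry_tup_mem (l : List X) :
    bdry (tup l) ∈ on {l' | l'.Sublist l ∧ l'.length + 1 = l.length} := by
  induction l with
  | nil => simp
  | cons v l ih =>
    rw [bdry_tup_cons]
    refine add_mem (tup_mem_on ⟨List.sublist_cons_self _ _, rfl⟩) (cons_mem_on (fun l' h => ?_) ih)
    exact ⟨h.1.cons_cons v, by simp [h.2]⟩

theorem bdry_mem {s : Set (List X)} (hs : IsHereditary s) {c : TupleChain X} (hc : c ∈ on s) :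
    bdry c ∈ on s :=
  map_mem_of_on _ (fun l hl => on_mono (fun l' h => hs l hl l' h.1) (bdry_tup_mem l)) hc

theorem bdry_mem_len {n : ℕ} {c : TupleChain X} (hc : c ∈ on (len X (n + 1))) :
    bdry c ∈ on (len X n) :=
  map_mem_of_on _ (fun l hl => on_mono
    (fun l' h => by have := h.2; simp only [len, Set.mem_ofPred_eq] at *; omega)
    (bdry_tup_mem l)) hc

theorem cap_tup_mem (a : X → ZMod 2) {l : List X} {s : Set (List X)} (h : l ∈ s) :
    cap a (tup l) ∈ on s := by
  cases l with
  | nil => simp only [cap_nil, zero_mem]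
  | cons v l => rw [cap_tup_cons]; exact Submodule.smul_mem _ _ (tup_mem_on h)

theorem cap_mem (a : X → ZMod 2) {s : Set (List X)} {c : TupleChain X} (hc : c ∈ on s) :
    cap a c ∈ on s :=
  map_mem_of_on _ (fun _ hl => cap_tup_mem a hl) hc

theorem dcap_tup_mem (a : X → ZMod 2) (l : List X) :
    dcap a (tup l) ∈ on {l' | l'.Sublist l ∧ l'.length + 1 = l.length ∧
      (l' = [] ∨ ∃ v ∈ l, ∃ w ∈ l, a v ≠ a w)} := by
  match l with
  | [] => simp only [dcap_nil, zero_mem]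
  | [v] =>
    rw [dcap_tup_singleton]
    exact Submodule.smul_mem _ _ (tup_mem_on ⟨List.nil_sublist _, rfl, Or.inl rfl⟩)
  | v :: w :: l =>
    rw [dcap_tup_cons_cons]
    by_cases h : a v = a w
    · rw [h, ZModModule.add_self, zero_smul]
      exact zero_mem _
    · exact Submodule.smul_mem _ _ (tup_mem_on
        ⟨List.sublist_cons_self _ _, rfl, Or.inr ⟨v, by simp, w, by simp, h⟩⟩)

theorem dcap_mem (a : X → ZMod 2) {s : Set (List X)} (hs : IsHereditary s) {c : TupleChain X}
    (hc : c ∈ on s) : dcap a c ∈ on s :=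
  map_mem_of_on _ (fun l hl => on_mono (fun l' h => hs l hl l' h.1) (dcap_tup_mem a l)) hc

theorem dcap_mem_len (a : X → ZMod 2) {n : ℕ} {c : TupleChain X} (hc : c ∈ on (len X (n + 1))) :
    dcap a c ∈ on (len X n) :=
  map_mem_of_on _ (fun l hl => on_mono
    (fun l' h => by have := h.2.1; simp only [len, Set.mem_ofPred_eq] at *; omega)
    (dcap_tup_mem a l)) hc

theorem dcap_mem_straddle (a : X → ZMod 2) {s t : Set (List X)} (h0 : [] ∈ t)
    (h : ∀ l ∈ s, (∃ v ∈ l, ∃ w ∈ l, a v ≠ a w) → l ∈ t) (ht : IsHereditary t) {c : TupleChain X}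
    (hc : c ∈ on s) : dcap a c ∈ on t := by
  refine map_mem_of_on _ (fun l hl => on_mono ?_ (dcap_tup_mem a l)) hc
  rintro l' ⟨hl', -, rfl | hne⟩
  exacts [h0, ht l (h l hl hne) l' hl']

theorem push_mem (g : X → Y) {s : Set (List X)} {t : Set (List Y)} (h : ∀ l ∈ s, l.map g ∈ t)
    {c : TupleChain X} (hc : c ∈ on s) : push g c ∈ on t :=
  map_mem_of_on _ (fun l hl => by rw [push_tup]; exact tup_mem_on (h l hl)) hc

theorem push_mem_within (g : X → Y) {A : Set X} {B : Set Y} (h : ∀ x ∈ A, g x ∈ B)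
    {c : TupleChain X} (hc : c ∈ on (within A)) : push g c ∈ on (within B) :=
  push_mem g (s := within A) (t := within B) (fun l hl v hv => by
    obtain ⟨w, hw, rfl⟩ := List.mem_map.1 hv
    exact h w (hl w hw)) hc

theorem push_mem_len (g : X → Y) {n : ℕ} {c : TupleChain X} (hc : c ∈ on (len X n)) :
    push g c ∈ on (len Y n) :=
  push_mem g (fun l hl => by simpa [len] using hl) hc

theorem push_mem_small [PseudoMetricSpace X] [PseudoMetricSpace Y] (g : X → Y) {A : Set X}
    {ε δ : ℝ} (h : ∀ x ∈ A, ∀ y ∈ A, dist x y ≤ ε → dist (g x) (g y) ≤ δ)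
    {c : TupleChain X} (hc : c ∈ on (within A)) (hc' : c ∈ on (small ε)) :
    push g c ∈ on (small δ) :=
  push_mem g (s := within A ∩ small ε) (t := small δ) (fun l hl v hv w hw => by
    obtain ⟨v', hv', rfl⟩ := List.mem_map.1 hv
    obtain ⟨w', hw', rfl⟩ := List.mem_map.1 hw
    exact h v' (hl.1 v' hv') w' (hl.1 w' hw') (hl.2 v' hv' w' hw')) (mem_on_inter hc hc')

theorem push_congr {g h : X → Y} {A : Set X} (hgh : ∀ x ∈ A, g x = h x) {c : TupleChain X}
    (hc : c ∈ on (within A)) : push g c = push h c :=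
  eq_of_on _ _ (fun l hl => by
    rw [push_tup, push_tup, List.map_congr_left fun v hv => hgh v (hl v hv)]) hc

theorem prism_tup_mem (g h : X → Y) (l : List X) :
    prism g h (tup l) ∈ on ({l' | ∀ v' ∈ l', ∃ v ∈ l, v' = g v ∨ v' = h v} ∩
      len Y (l.length + 1)) := by
  induction l with
  | nil => simp
  | cons v l ih =>
    rw [prism_tup_cons]
    refine add_mem (tup_mem_on (s := _ ∩ _) ⟨?_, by simp [len]⟩)
      (cons_mem_on (t := _ ∩ _) (fun l' h' => ⟨?_, ?_⟩) ih)
    · intro v' hv'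
      simp only [List.mem_cons, List.mem_map] at hv'
      rcases hv' with rfl | rfl | ⟨w, hw, rfl⟩
      · exact ⟨v, by simp⟩
      · exact ⟨v, by simp⟩
      · exact ⟨w, by simp [hw]⟩
    · intro v' hv'
      rcases List.mem_cons.1 hv' with rfl | hv'
      · exact ⟨v, by simp⟩
      · obtain ⟨w, hw, hw'⟩ := h'.1 v' hv'
        exact ⟨w, by simp [hw], hw'⟩
    · have := h'.2
      simp only [len, Set.mem_ofPred_eq, List.length_cons] at *
      omega

theorem prism_mem_len (g h : X → Y) {n : ℕ} {c : TupleChain X} (hc : c ∈ on (len X n)) :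
    prism g h c ∈ on (len Y (n + 1)) :=
  map_mem_of_on _ (fun l hl => on_mono
    (fun l' hl' => by have := hl'.2; simp only [len, Set.mem_ofPred_eq] at *; omega)
    (prism_tup_mem g h l)) hc

theorem prism_mem_within (g h : X → Y) {A : Set X} {B : Set Y} (hg : ∀ x ∈ A, g x ∈ B)
    (hh : ∀ x ∈ A, h x ∈ B) {c : TupleChain X} (hc : c ∈ on (within A)) :
    prism g h c ∈ on (within B) :=
  map_mem_of_on _ (fun l hl => on_mono (fun l' hl' v' hv' => by
    obtain ⟨v, hv, rfl | rfl⟩ := hl'.1 v' hv'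
    exacts [hg v (hl v hv), hh v (hl v hv)]) (prism_tup_mem g h l)) hc

theorem prism_mem_small [PseudoMetricSpace X] [PseudoMetricSpace Y] (g h : X → Y) {A : Set X}
    {ε δ : ℝ} (hg : ∀ x ∈ A, ∀ y ∈ A, dist x y ≤ ε → dist (g x) (g y) ≤ δ)
    (hh : ∀ x ∈ A, ∀ y ∈ A, dist x y ≤ ε → dist (h x) (h y) ≤ δ)
    (hgh : ∀ x ∈ A, ∀ y ∈ A, dist x y ≤ ε → dist (g x) (h y) ≤ δ)
    {c : TupleChain X} (hc : c ∈ on (within A)) (hc' : c ∈ on (small ε)) :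
    prism g h c ∈ on (small δ) :=
  map_mem_of_on (s := within A ∩ small ε) _ (fun l hl => on_mono (fun l' hl' v' hv' w' hw' => by
    obtain ⟨v, hv, hv'⟩ := hl'.1 v' hv'
    obtain ⟨w, hw, hw'⟩ := hl'.1 w' hw'
    have hd := hl.2 v hv w hw
    have hv := hl.1 v hv
    have hw := hl.1 w hw
    rcases hv' with rfl | rfl <;> rcases hw' with rfl | rfl
    · exact hg v hv w hw hd
    · exact hgh v hv w hw hd
    · rw [dist_comm]; exact hgh w hw v hv (by rwa [dist_comm])
    · exact hh v hv w hw hd) (prism_tup_mem g h l)) (mem_on_inter hc hc')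

/-- Iterated cap products with coboundaries. -/
def dcaps (a : ι → X → ZMod 2) : List ι → TupleChain X →ₗ[ZMod 2] TupleChain X
  | [] => LinearMap.id
  | i :: L => dcaps a L ∘ₗ dcap (a i)

@[simp] theorem dcaps_nil (a : ι → X → ZMod 2) (c : TupleChain X) : dcaps a [] c = c := rfl

theorem dcaps_cons (a : ι → X → ZMod 2) (i : ι) (L : List ι) (c : TupleChain X) :
    dcaps a (i :: L) c = dcaps a L (dcap (a i) c) := rfl

theorem bdry_dcaps (a : ι → X → ZMod 2) (L : List ι) (c : TupleChain X) :
    bdry (dcaps a L c) = dcaps a L (bdry c) := by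
  induction L generalizing c with
  | nil => rfl
  | cons i L ih => rw [dcaps_cons, dcaps_cons, ih, bdry_dcap]

theorem dcaps_push (g : X → Y) (a : ι → Y → ZMod 2) (L : List ι) (c : TupleChain X) :
    dcaps a L (push g c) = push g (dcaps (fun i => a i ∘ g) L c) := by
  induction L generalizing c with
  | nil => rfl
  | cons i L ih => rw [dcaps_cons, dcaps_cons, dcap_push, ih]

theorem dcaps_congr {a b : ι → X → ZMod 2} {L : List ι} (h : ∀ i ∈ L, a i = b i)
    (c : TupleChain X) : dcaps a L c = dcaps b L c := by
  induction L generalizing c with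
  | nil => rfl
  | cons i L ih =>
    rw [dcaps_cons, dcaps_cons, h i (by simp), ih fun j hj => h j (by simp [hj])]

theorem dcaps_mem_nil (a : ι → X → ZMod 2) (L : List ι) {c : TupleChain X} (hc : c ∈ on {[]}) :
    dcaps a L c ∈ on {[]} := by
  induction L generalizing c with
  | nil => exact hc
  | cons i _ ih =>
    refine ih (map_mem_of_on _ (fun l hl => ?_) hc)
    rw [Set.mem_singleton_iff.1 hl, dcap_nil]
    exact zero_mem _

theorem bdry_of_mem_nil {c : TupleChain X} (hc : c ∈ on {[]}) : bdry c = 0 := by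
  refine eq_zero_of_on _ (fun l hl => ?_) hc
  rw [Set.mem_singleton_iff.1 hl, bdry_nil]

theorem bdry_dcaps_tup_of_const (a : ι → X → ZMod 2) {L : List ι} {l : List X}
    (h : ∃ i ∈ L, ∀ v ∈ l, ∀ w ∈ l, a i v = a i w) : bdry (dcaps a L (tup l)) = 0 := by
  induction L generalizing l with
  | nil => simp at h
  | cons j L ih =>
    obtain ⟨i, hi, h⟩ := h
    rw [dcaps_cons]
    rcases List.mem_cons.1 hi with rfl | hi
    · refine bdry_of_mem_nil (dcaps_mem_nil _ _ (on_mono ?_ (dcap_tup_mem (a i) l)))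
      rintro l' ⟨-, -, hl' | ⟨v, hv, w, hw, hne⟩⟩
      exacts [hl', absurd (h v hv w hw) hne]
    · exact eq_zero_of_on (bdry ∘ₗ dcaps a L)
        (fun l' hl' => ih ⟨i, hi, fun v hv w hw => h v (hl'.1.subset hv) w (hl'.1.subset hw)⟩)
        (dcap_tup_mem (a j) l)

theorem bdry_dcaps_of_const (a : ι → X → ZMod 2) (L : List ι) {c : TupleChain X}
    (hc : c ∈ on {l | ∃ i ∈ L, ∀ v ∈ l, ∀ w ∈ l, a i v = a i w}) : bdry (dcaps a L c) = 0 :=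
  eq_zero_of_on (bdry ∘ₗ dcaps a L) (fun _ hl => bdry_dcaps_tup_of_const a hl) hc

theorem dcaps_mem_len (a : ι → X → ZMod 2) (L : List ι) {n : ℕ} {c : TupleChain X}
    (hc : c ∈ on (len X (n + L.length))) : dcaps a L c ∈ on (len X n) := by
  induction L generalizing c with
  | nil => exact hc
  | cons i L ih => exact ih (dcap_mem_len _ hc)

theorem len_zero : len X 0 = {[]} := by
  ext l
  simp [len, List.length_eq_zero_iff]

theorem bdry_dcaps_of_len (a : ι → X → ZMod 2) (L : List ι) {c : TupleChain X}
    (hc : c ∈ on (len X L.length)) : bdry (dcaps a L c) = 0 :=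
  bdry_of_mem_nil (by
    rw [← len_zero]
    exact dcaps_mem_len a L (by rwa [zero_add]))

/-- The degree of a chain with respect to the cup product of the coboundaries of `a i`, `i ∈ L`. If
the `a i` are indicators of coordinate half-spaces through a point, this is the local degree at that
point. It is the coefficient of the empty tuple, so it vanishes on chains without tuples of length
`L.length + 1`. -/
def deg (a : ι → X → ZMod 2) (L : List ι) : TupleChain X →ₗ[ZMod 2] ZMod 2 :=
  lapply [] ∘ₗ bdry ∘ₗ dcaps a L

theorem deg_apply (a : ι → X → ZMod 2) (L : List ι) (c : TupleChain X) :
    deg a L c = bdry (dcaps a L c) [] := rfl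

theorem deg_eq_dcaps_bdry (a : ι → X → ZMod 2) (L : List ι) (c : TupleChain X) :
    deg a L c = dcaps a L (bdry c) [] := by
  rw [deg_apply, bdry_dcaps]

theorem deg_bdry (a : ι → X → ZMod 2) (L : List ι) (c : TupleChain X) : deg a L (bdry c) = 0 := by
  rw [deg_eq_dcaps_bdry, bdry_bdry, map_zero, coe_zero, Pi.zero_apply]

theorem deg_of_const (a : ι → X → ZMod 2) (L : List ι) {c : TupleChain X}
    (hc : c ∈ on {l | ∃ i ∈ L, ∀ v ∈ l, ∀ w ∈ l, a i v = a i w}) : deg a L c = 0 := by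
  rw [deg_apply, bdry_dcaps_of_const a L hc, coe_zero, Pi.zero_apply]

theorem bdry_dcaps_eq_zero_of_deg (a : ι → X → ZMod 2) (L : List ι) {c : TupleChain X}
    (hc : c ∈ on (len X (L.length + 1))) (h : deg a L c = 0) : bdry (dcaps a L c) = 0 := by
  have := bdry_mem_len (dcaps_mem_len a L (n := 1) (by rwa [add_comm]))
  rw [len_zero] at this
  ext l
  by_cases hl : l = []
  · rw [hl]; exact h
  · exact Finsupp.notMem_support_iff.1 fun h' => hl (this h')

theorem push_nil_apply (g : X → Y) (c : TupleChain X) : push g c [] = c [] := by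
  have : (lapply [] : TupleChain Y →ₗ[ZMod 2] _) ∘ₗ push g = lapply [] := hom_ext fun l => by
    cases l <;> simp
  exact LinearMap.congr_fun this c

theorem deg_push (g : X → Y) (a : ι → Y → ZMod 2) (L : List ι) (c : TupleChain X) :
    deg a L (push g c) = deg (fun i => a i ∘ g) L c := by
  rw [deg_apply, dcaps_push, bdry_push, push_nil_apply, deg_apply]

/-! ### Small chains in a cube -/

section SmallChains

theorem within_inter (A B : Set X) : within (A ∩ B) = within A ∩ within B := by
  ext l
  exact ⟨fun h => ⟨fun v hv => (h v hv).1, fun v hv => (h v hv).2⟩,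
    fun h v hv => ⟨h.1 v hv, h.2 v hv⟩⟩

theorem mem_within_inter {A B : Set X} {c : TupleChain X} (hA : c ∈ on (within A))
    (hB : c ∈ on (within B)) : c ∈ on (within (A ∩ B)) := by
  rw [within_inter]
  exact mem_on_inter hA hB

theorem mem_within_univ (c : TupleChain X) : c ∈ on (within Set.univ) := by
  rw [show within (Set.univ : Set X) = Set.univ from
    Set.eq_univ_of_forall fun _ _ _ => Set.mem_univ _, on, supported_univ]
  exact Submodule.mem_top

/-- The chain swept out by the image of a chain under the discrete motion `S 0, …, S m`, as a sum of
prisms. -/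
def sweep (S : ℕ → X → Y) (m : ℕ) : TupleChain X →ₗ[ZMod 2] TupleChain Y :=
  ∑ k ∈ Finset.range m, prism (S k) (S (k + 1))

theorem sweep_apply (S : ℕ → X → Y) (m : ℕ) (c : TupleChain X) :
    sweep S m c = ∑ k ∈ Finset.range m, prism (S k) (S (k + 1)) c :=
  LinearMap.sum_apply _ _ _

theorem sum_range_add_succ {V : Type*} [AddCommGroup V] [Module (ZMod 2) V] (f : ℕ → V) (m : ℕ) :
    ∑ k ∈ Finset.range m, (f k + f (k + 1)) = f 0 + f m := by
  rw [← ZModModule.sub_eq_add (f 0), ← Finset.sum_range_sub']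
  simp only [ZModModule.sub_eq_add]

theorem bdry_sweep (S : ℕ → X → Y) (m : ℕ) (c : TupleChain X) :
    bdry (sweep S m c) = push (S 0) c + push (S m) c + sweep S m (bdry c) := by
  simp only [sweep_apply, map_sum, bdry_prism]
  rw [Finset.sum_add_distrib, sum_range_add_succ fun k => push (S k) c]

theorem sweep_mem_within {S : ℕ → X → Y} {m : ℕ} {A : Set X} {B : Set Y}
    (hS : ∀ k ≤ m, ∀ x ∈ A, S k x ∈ B) {c : TupleChain X} (hc : c ∈ on (within A)) :
    sweep S m c ∈ on (within B) := by
  rw [sweep_apply]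
  refine sum_mem fun k hk => ?_
  have hkm := Finset.mem_range.1 hk
  exact prism_mem_within _ _ (hS k hkm.le) (hS (k + 1) hkm) hc

theorem sweep_mem_small [PseudoMetricSpace X] [PseudoMetricSpace Y] {S : ℕ → X → Y} {m : ℕ}
    {ε τ : ℝ} (hS : ∀ k x y, dist (S k x) (S k y) ≤ dist x y)
    (hτ : ∀ k x, dist (S k x) (S (k + 1) x) ≤ τ) {c : TupleChain X} (hc : c ∈ on (small ε)) :
    sweep S m c ∈ on (small (ε + τ)) := by
  rw [sweep_apply]
  refine sum_mem fun k _ => prism_mem_small _ _ (A := Set.univ) (fun x _ y _ h => ?_)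
    (fun x _ y _ h => ?_) (fun x _ y _ h => ?_) (mem_within_univ c) hc
  · linarith [hS k x y, dist_nonneg.trans (hτ k x)]
  · linarith [hS (k + 1) x y, dist_nonneg.trans (hτ k x)]
  · linarith [hS k x y, hτ k y, dist_triangle (S k x) (S k y) (S (k + 1) y)]

theorem sweep_mem_len (S : ℕ → X → Y) (m : ℕ) {n : ℕ} {c : TupleChain X} (hc : c ∈ on (len X n)) :
    sweep S m c ∈ on (len Y (n + 1)) := by
  rw [sweep_apply]
  exact sum_mem fun k _ => prism_mem_len _ _ hc

theorem cap_mem_ne (a : X → ZMod 2) {s : Set (List X)} {c : TupleChain X} (hc : c ∈ on s) :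
    cap a c ∈ on {l | l ∈ s ∧ ∃ v ∈ l, a v ≠ 0} := by
  refine map_mem_of_on _ (fun l hl => ?_) hc
  cases l with
  | nil => simp only [cap_nil, zero_mem]
  | cons v l =>
    rw [cap_tup_cons]
    by_cases h : a v = 0
    · rw [h, zero_smul]
      exact zero_mem _
    · exact Submodule.smul_mem _ _ (tup_mem_on ⟨hl, v, by simp, h⟩)

theorem add_cap_mem_eq (a : X → ZMod 2) {s : Set (List X)} {c : TupleChain X} (hc : c ∈ on s) :
    c + cap a c ∈ on {l | l ∈ s ∧ (l = [] ∨ ∃ v ∈ l, a v = 0)} := by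
  refine map_mem_of_on (LinearMap.id + cap a) (fun l hl => ?_) hc
  rw [LinearMap.add_apply, LinearMap.id_apply]
  cases l with
  | nil =>
    rw [cap_nil, add_zero]
    exact tup_mem_on ⟨hl, Or.inl rfl⟩
  | cons v l =>
    rw [cap_tup_cons]
    by_cases h : a v = 0
    · rw [h, zero_smul, add_zero]
      exact tup_mem_on ⟨hl, Or.inr ⟨v, by simp, h⟩⟩
    · rw [show a v = 1 from Fin.eq_one_of_ne_zero _ h, one_smul, ZModModule.add_self]
      exact zero_mem _

/-- The indicator of the half-space `x i ≤ v i`. The cap product with the coboundaries of these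
indicators, over all `i`, computes local degrees at `x`. -/
def half (x : ι → ℝ) (i : ι) (v : ι → ℝ) : ZMod 2 := if x i ≤ v i then 1 else 0

theorem abs_le_of_half_ne {x v w : ι → ℝ} {i : ι} (h : half x i v ≠ half x i w) :
    |v i - x i| ≤ |v i - w i| := by
  unfold half at h
  split_ifs at h with h1 h2 h2
  · simp at h
  · rw [abs_of_nonneg (by linarith), abs_of_nonneg (by linarith)]; linarith
  · rw [abs_of_nonpos (by linarith), abs_of_nonpos (by linarith)]; linarith
  · simp at h

/-- The complement of the open cube of centre `p` and radius `ρ`. -/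
def far (p : ι → ℝ) (ρ : ℝ) : Set (ι → ℝ) := {x | ∃ i, ρ ≤ |x i - p i|}

/-- The points whose coordinates outside `L` are `ε`-close to those of `p`. -/
def slab (p : ι → ℝ) (ε : ℝ) (L : List ι) : Set (ι → ℝ) := {x | ∀ j ∉ L, |x j - p j| ≤ ε}

/-- The half-space bounded by the `i`-th coordinate hyperplane through `p`, on the side given by the
sign `s`, enlarged by `ε`. -/
def halfSpace (p : ι → ℝ) (i : ι) (s ε : ℝ) : Set (ι → ℝ) := {x | -ε ≤ s * (x i - p i)}

theorem slab_subset_slab_cons (p : ι → ℝ) (ε : ℝ) (i : ι) (L : List ι) :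
    slab p ε L ⊆ slab p ε (i :: L) :=
  fun _ hx j hj => hx j fun h => hj (by simp [h])

theorem slab_subset_halfSpace {p : ι → ℝ} {ε s : ℝ} {i : ι} {L : List ι} (hi : i ∉ L)
    (hs : |s| = 1) : slab p ε L ⊆ halfSpace p i s ε := fun x hx => by
  have h : |s * (x i - p i)| ≤ ε := by rw [abs_mul, hs, one_mul]; exact hx i hi
  exact (abs_le.1 h).1

theorem mem_far_iff [Fintype ι] {p x : ι → ℝ} {ρ : ℝ} (hρ : 0 < ρ) :
    x ∈ far p ρ ↔ ρ ≤ dist x p := by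
  constructor
  · rintro ⟨i, hi⟩
    exact hi.trans (dist_le_pi_dist x p i)
  · intro h
    by_contra h'
    simp only [far, Set.mem_ofPred_eq, not_exists, not_le] at h'
    exact absurd ((dist_pi_lt_iff hρ).2 h') (not_lt.2 h)

section Shift

variable [DecidableEq ι]

/-- Translation by `t` in the direction of the `i`-th coordinate. -/
def shift (i : ι) (t : ℝ) (x : ι → ℝ) : ι → ℝ := x + Pi.single i t

@[simp] theorem shift_zero (i : ι) (x : ι → ℝ) : shift i 0 x = x := by simp [shift]

@[simp] theorem shift_apply_self (i : ι) (t : ℝ) (x : ι → ℝ) : shift i t x i = x i + t := by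
  simp [shift]

theorem shift_apply_of_ne {i j : ι} (h : j ≠ i) (t : ℝ) (x : ι → ℝ) : shift i t x j = x j := by
  simp [shift, h]

theorem dist_shift_shift [Fintype ι] (i : ι) (t : ℝ) (x y : ι → ℝ) :
    dist (shift i t x) (shift i t y) = dist x y :=
  dist_add_right x y _

theorem dist_shift_shift_same [Fintype ι] (i : ι) (s t : ℝ) (x : ι → ℝ) :
    dist (shift i s x) (shift i t x) = |s - t| := by
  rw [shift, shift, dist_add_left, dist_eq_norm, ← Pi.single_sub, Pi.norm_single, Real.norm_eq_abs]

theorem shift_mem_slab {p x : ι → ℝ} {ε t : ℝ} {i : ι} {L : List ι} (hi : i ∈ L)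
    (hx : x ∈ slab p ε L) : shift i t x ∈ slab p ε L := fun j hj => by
  rw [shift_apply_of_ne (by rintro rfl; exact hj hi)]
  exact hx j hj

variable {p x : ι → ℝ} {ε ρ s t : ℝ} {i : ι}

theorem mul_shift_apply_self_sub (hs : |s| = 1) :
    s * (shift i (s * t) x i - p i) = s * (x i - p i) + t := by
  have hss : s * s = 1 := by rw [← abs_mul_abs_self, hs, one_mul]
  rw [shift_apply_self]
  linear_combination t * hss

theorem shift_mem_far_of_add_le (hs : |s| = 1) (ht : ρ + ε ≤ t) (hx : x ∈ halfSpace p i s ε) :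
    shift i (s * t) x ∈ far p ρ := by
  rw [halfSpace, Set.mem_ofPred_eq] at hx
  refine ⟨i, ?_⟩
  rw [← one_mul |_|, ← hs, ← abs_mul, mul_shift_apply_self_sub hs]
  exact le_trans (by linarith) (le_abs_self _)

theorem shift_mem_far (hs : |s| = 1) (hε : ε < ρ) (ht : 0 ≤ t) (hx : x ∈ halfSpace p i s ε)
    (hx' : x ∈ far p ρ) : shift i (s * t) x ∈ far p ρ := by
  obtain ⟨j, hj⟩ := hx'
  refine ⟨j, ?_⟩
  rcases eq_or_ne j i with rfl | hji
  · rw [halfSpace, Set.mem_ofPred_eq] at hx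
    rw [← one_mul |_|, ← hs, ← abs_mul] at hj ⊢
    rw [mul_shift_apply_self_sub hs]
    rcases le_abs.1 hj with h | h
    · exact le_trans (by linarith) (le_abs_self _)
    · linarith
  · rwa [shift_apply_of_ne hji]

end Shift

theorem exists_steps {T η : ℝ} (hT : 0 ≤ T) (hη : 0 < η) :
    ∃ (t : ℕ → ℝ) (n : ℕ), t 0 = 0 ∧ t n = T ∧ (∀ k, 0 ≤ t k ∧ t k ≤ T) ∧
      ∀ k, |t k - t (k + 1)| ≤ η := by
  obtain ⟨n, hn⟩ := exists_nat_ge (T / η)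
  rw [div_le_iff₀ hη] at hn
  refine ⟨fun k => min (k * η) T, n, by simp [hT], min_eq_right hn,
    fun k => ⟨by positivity, min_le_right _ _⟩, fun k => ?_⟩
  refine (abs_min_sub_min_le_max _ _ _ _).trans (max_le ?_ (by simp [hη.le]))
  rw [← sub_mul, Nat.cast_succ, sub_add_cancel_left, neg_one_mul, abs_neg, abs_of_pos hη]

variable [Fintype ι]

theorem exists_push_out {p : ι → ℝ} {ε ρ δ δ' s : ℝ} {L : List ι} {i : ι} (hi : i ∈ L)
    (hs : |s| = 1) (hε : ε < ρ) (hδ : δ < δ') {c : TupleChain (ι → ℝ)} (hcδ : c ∈ on (small δ))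
    (hcL : c ∈ on (within (slab p ε L))) (hci : c ∈ on (within (halfSpace p i s ε)))
    (hc : bdry c ∈ on (within (far p ρ))) :
    ∃ w ∈ on (within (slab p ε L)), w ∈ on (small δ') ∧ c + bdry w ∈ on (within (far p ρ)) := by
  classical
  obtain ⟨t, n, ht0, hn, ht, hstep⟩ :=
    exists_steps (le_max_left 0 (ρ + ε)) (show 0 < δ' - δ by linarith)
  let S : ℕ → (ι → ℝ) → ι → ℝ := fun k => shift i (s * t k)
  have hS0 : push (S 0) c = c := by
    rw [show S 0 = fun x => x by ext1 x; simp only [S, ht0, mul_zero, shift_zero], push_id]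
  have hdist : ∀ k x, dist (S k x) (S (k + 1) x) ≤ δ' - δ := fun k x => by
    rw [dist_shift_shift_same, ← mul_sub, abs_mul, hs, one_mul]
    exact hstep k
  have hiso : ∀ k x y, dist (S k x) (S k y) ≤ dist x y := fun k x y =>
    (dist_shift_shift i (s * t k) x y).le
  have hsmall : sweep S n c ∈ on (small (δ + (δ' - δ))) := sweep_mem_small hiso hdist hcδ
  have hslab : sweep S n c ∈ on (within (slab p ε L)) :=
    sweep_mem_within (fun k _ x hx => shift_mem_slab hi hx) hcL
  have hout : push (S n) c ∈ on (within (far p ρ)) :=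
    push_mem_within (A := halfSpace p i s ε) _
      (fun x hx => shift_mem_far_of_add_le hs (hn ▸ le_max_right _ _) hx) hci
  have hside : sweep S n (bdry c) ∈ on (within (far p ρ)) :=
    sweep_mem_within (A := far p ρ ∩ halfSpace p i s ε)
      (fun k _ x hx => shift_mem_far hs hε (ht k).1 hx.2 hx.1)
      (mem_within_inter hc (bdry_mem (isHereditary_within _) hci))
  refine ⟨sweep S n c, hslab, by rwa [add_sub_cancel] at hsmall, ?_⟩
  rw [bdry_sweep, hS0, add_assoc, ← add_assoc, ZModModule.add_self, zero_add]
  exact add_mem hout hside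

theorem dcap_half_mem_slab {p : ι → ℝ} {ε : ℝ} {i : ι} {L : List ι} {z : TupleChain (ι → ℝ)}
    (hz : z ∈ on (small ε)) (hzL : z ∈ on (within (slab p ε (i :: L)))) :
    dcap (half p i) z ∈ on (within (slab p ε L)) := by
  refine dcap_mem_straddle _ (s := small ε ∩ within (slab p ε (i :: L)))
    (by intro v hv; simp at hv) ?_ (isHereditary_within _) (mem_on_inter hz hzL)
  rintro l ⟨hl, hl'⟩ ⟨v, hv, w, hw, hvw⟩ u hu j hj
  rcases eq_or_ne j i with rfl | hji
  · obtain ⟨u', hu', h⟩ : ∃ u' ∈ l, half p j u ≠ half p j u' := by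
      by_cases h : half p j u = half p j v
      · exact ⟨w, hw, h ▸ hvw⟩
      · exact ⟨v, hv, h⟩
    exact (abs_le_of_half_ne h).trans ((dist_le_pi_dist u u' j).trans (hl u hu u' hu'))
  · exact hl' u hu j (by simp [hji, hj])

theorem cap_half_mem_halfSpace (p : ι → ℝ) {ε : ℝ} (i : ι) {z : TupleChain (ι → ℝ)}
    (hz : z ∈ on (small ε)) : cap (half p i) z ∈ on (within (halfSpace p i 1 ε)) := by
  refine on_mono ?_ (cap_mem_ne _ hz)
  rintro l ⟨hl, v, hv, hpv⟩ u hu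
  have hd := (dist_le_pi_dist v u i).trans (hl v hv u hu)
  rw [Real.dist_eq, abs_le] at hd
  have hle : p i ≤ v i := by
    by_contra h
    exact hpv (by simp [half, h])
  rw [halfSpace, Set.mem_ofPred_eq]
  linarith

theorem add_cap_half_mem_halfSpace (p : ι → ℝ) {ε : ℝ} (i : ι) {z : TupleChain (ι → ℝ)}
    (hz : z ∈ on (small ε)) : z + cap (half p i) z ∈ on (within (halfSpace p i (-1) ε)) := by
  refine on_mono ?_ (add_cap_mem_eq _ hz)
  rintro l ⟨hl, rfl | ⟨v, hv, hpv⟩⟩ u hu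
  · simp at hu
  · have hd := (dist_le_pi_dist v u i).trans (hl v hv u hu)
    rw [Real.dist_eq, abs_le] at hd
    have hlt : v i < p i := by
      by_contra h
      rw [not_lt] at h
      simp [half, h] at hpv
    rw [halfSpace, Set.mem_ofPred_eq]
    linarith

theorem exists_small_filling_nil (p : ι → ℝ) {ε : ℝ} (hε : 0 ≤ ε) {z : TupleChain (ι → ℝ)}
    (hz : z ∈ on (small ε)) (hzL : z ∈ on (within (slab p ε []))) (hb : bdry z = 0) :
    ∃ w ∈ on (within (slab p ε [])), w ∈ on (small ε) ∧ z + bdry w = 0 := by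
  refine ⟨cons p z, cons_mem_on (s := within (slab p ε [])) ?_ hzL,
    cons_mem_on (s := small ε ∩ within (slab p ε [])) ?_ (mem_on_inter hz hzL), ?_⟩
  · intro l hl v hv
    rcases List.mem_cons.1 hv with rfl | hv
    · intro j _
      simpa using hε
    · exact hl v hv
  · intro l hl v hv w hw
    have h : ∀ u ∈ l, dist u p ≤ ε := fun u hu =>
      (dist_pi_le_iff hε).2 fun j => hl.2 u hu j (by simp)
    rcases List.mem_cons.1 hv with hvp | hv <;> rcases List.mem_cons.1 hw with hwp | hw
    · simpa [hvp, hwp] using hε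
    · rw [hvp, dist_comm]; exact h w hw
    · rw [hwp]; exact h v hv
    · exact hl.1 v hv w hw
  · rw [bdry_cons, hb, map_zero, add_zero, ZModModule.add_self]

/-- The chain is cut along the hyperplane `x i = p i`. The cut has vanishing degree with respect to
the remaining coordinates, so it is filled by induction, and the two closed-up halves can be moved
away from `p` in opposite directions. -/
theorem exists_small_filling (p : ι → ℝ) {ε ρ : ℝ} (hε0 : 0 ≤ ε) (hε : ε < ρ) {L : List ι}
    (hL : L.Nodup) {ε' : ℝ} (hε' : ε < ε')
    {z : TupleChain (ι → ℝ)} (hz : z ∈ on (small ε)) (hzL : z ∈ on (within (slab p ε L)))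
    (hzb : bdry z ∈ on (within (far p ρ))) (hdeg : bdry (dcaps (half p) L z) = 0) :
    ∃ w ∈ on (within (slab p ε L)), w ∈ on (small ε') ∧ z + bdry w ∈ on (within (far p ρ)) := by
  induction L generalizing z ε' with
  | nil =>
    obtain ⟨w, hwL, hwε, hw⟩ := exists_small_filling_nil p hε0 hz hzL hdeg
    exact ⟨w, hwL, on_mono (small_mono hε'.le) hwε, hw ▸ zero_mem _⟩
  | cons i L ih =>
    obtain ⟨hi, hL⟩ := List.nodup_cons.1 hL
    obtain ⟨w, hwL, hwε, hw⟩ := ih hL (ε' := (ε + ε') / 2) (by linarith)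
      (dcap_mem (half p i) (isHereditary_small _) hz) (dcap_half_mem_slab hz hzL)
      (by rw [bdry_dcap]; exact dcap_mem _ (isHereditary_within _) hzb) hdeg
    have hwL' := on_mono (within_mono (slab_subset_slab_cons p ε i L)) hwL
    have hwi {s : ℝ} (hs : |s| = 1) : w ∈ on (within (halfSpace p i s ε)) :=
      on_mono (within_mono (slab_subset_halfSpace hi hs)) hwL
    have hmono : small ε ⊆ small (X := ι → ℝ) ((ε + ε') / 2) := small_mono (by linarith)
    have hb : bdry (cap (half p i) z + w) ∈ on (within (far p ρ)) := by
      rw [map_add, bdry_cap, add_right_comm]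
      exact add_mem hw (cap_mem _ hzb)
    have hb' : bdry (z + cap (half p i) z + w) ∈ on (within (far p ρ)) := by
      rw [add_assoc, map_add]
      exact add_mem hzb hb
    obtain ⟨u, huL, huε, hu⟩ := exists_push_out (s := 1) (δ' := ε') List.mem_cons_self (by simp) hε
      (by linarith) (add_mem (on_mono hmono (cap_mem _ hz)) hwε) (add_mem (cap_mem _ hzL) hwL')
      (add_mem (cap_half_mem_halfSpace p i hz) (hwi (by simp))) hb
    obtain ⟨u', huL', huε', hu'⟩ := exists_push_out (s := -1) (δ' := ε') List.mem_cons_self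
      (by simp) hε (by linarith) (add_mem (on_mono hmono (add_mem hz (cap_mem _ hz))) hwε)
      (add_mem (add_mem hzL (cap_mem _ hzL)) hwL')
      (add_mem (add_cap_half_mem_halfSpace p i hz) (hwi (by simp))) hb'
    refine ⟨u + u', add_mem huL huL', add_mem huε huε', ?_⟩
    convert add_mem hu hu' using 1
    rw [map_add]
    abel_nf
    simp only [two_zsmul_eq_zero, add_zero]

end SmallChains

/-! ### Fundamental chains of cubes -/

section Fundamental

theorem dcap_cons (a : X → ZMod 2) (v : X) (c : TupleChain X) :
    dcap a (cons v c) = a v • c + cap a c := by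
  have : dcap a ∘ₗ cons v = a v • LinearMap.id + cap a := hom_ext fun l => by
    simp only [LinearMap.comp_apply, cons_tup, dcap_tup_cons, LinearMap.add_apply,
      LinearMap.smul_apply, LinearMap.id_apply]
  exact LinearMap.congr_fun this c

theorem cap_prism_tup (a : Y → ZMod 2) (g h : X → Y) {s : ZMod 2} {l : List X}
    (hl : ∀ v ∈ l, a (g v) = s) : cap a (prism g h (tup l)) = s • prism g h (tup l) := by
  cases l with
  | nil => rw [prism_nil, map_zero, smul_zero]
  | cons v l => rw [prism_tup_cons, map_add, cap_tup_cons, cap_cons, hl v (by simp), smul_add]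

theorem dcap_prism_of_const {a : Y → ZMod 2} {g h : X → Y} {s s' : ZMod 2} {n : ℕ}
    {c : TupleChain X} (hcn : c ∈ on (len X (n + 1)))
    (hc : c ∈ on (within {v | a (g v) = s ∧ a (h v) = s'})) :
    dcap a (prism g h c) = (s + s') • push h c := by
  rw [← LinearMap.comp_apply, ← LinearMap.smul_apply]
  refine eq_of_on _ _ (fun l hl => ?_) (mem_on_inter hcn hc)
  match l, hl with
  | [], hl => simp [len] at hl
  | v :: l, hl =>
    have hv := hl.2 v (by simp)
    simp only [Set.mem_ofPred_eq] at hv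
    rw [LinearMap.comp_apply, prism_tup_cons, map_add, dcap_tup_cons_cons, dcap_cons,
      cap_prism_tup a g h (s := s) (fun w hw => (hl.2 w (by simp [hw])).1), hv.1, hv.2,
      ZModModule.add_self, add_zero, LinearMap.smul_apply, push_tup, List.map_cons]

theorem deg_cons_sweep {a : ι → Y → ZMod 2} {b : ι → X → ZMod 2} {i : ι} {L : List ι}
    {S : ℕ → X → Y} {s : ℕ → ZMod 2} {n : ℕ} {c : TupleChain X} (hcn : c ∈ on (len X (n + 1)))
    (hc : c ∈ on (within {v | ∀ k, a i (S k v) = s k})) (hab : ∀ k, ∀ j ∈ L, a j ∘ S k = b j)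
    (m : ℕ) : deg a (i :: L) (sweep S m c) = (s 0 + s m) * deg b L c := by
  have hprism (k : ℕ) :
      deg a (i :: L) (prism (S k) (S (k + 1)) c) = (s k + s (k + 1)) * deg b L c := by
    have hk : c ∈ on (within {v | a i (S k v) = s k ∧ a i (S (k + 1) v) = s (k + 1)}) :=
      on_mono (fun l hl v hv => ⟨hl v hv k, hl v hv (k + 1)⟩) hc
    rw [deg_apply, dcaps_cons, dcap_prism_of_const hcn hk, map_smul, map_smul, coe_smul,
      Pi.smul_apply, smul_eq_mul, ← deg_apply, deg_push, deg_apply, deg_apply,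
      dcaps_congr (hab (k + 1))]
  rw [sweep_apply, map_sum, Finset.sum_congr rfl fun k _ => hprism k, ← Finset.sum_mul,
    sum_range_add_succ]

section

variable {q x : ι → ℝ} {R : ℝ} {i : ι} {L : List ι}

theorem slab_zero_subset (hi : i ∉ L) : slab q 0 L ⊆ {x | x i = q i} := fun _ hx =>
  sub_eq_zero.1 (abs_nonpos_iff.1 (hx i hi))

variable [DecidableEq ι]

theorem shift_mem_far_of_eq (t : ℝ) (hR : 0 < R) (hx : x ∈ far q R) (hxi : x i = q i) :
    shift i t x ∈ far q R := by
  obtain ⟨j, hj⟩ := hx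
  have hji : j ≠ i := by
    rintro rfl
    rw [hxi, sub_self, abs_zero] at hj
    exact hR.not_ge hj
  exact ⟨j, by rwa [shift_apply_of_ne hji]⟩

theorem deg_half_cons_sweep_shift {t : ℕ → ℝ} {m n : ℕ} (hi : i ∉ L) {G : TupleChain (ι → ℝ)}
    (hGn : G ∈ on (len _ (n + 1))) (hG : G ∈ on (within {v | v i = q i})) (h0 : q i + t 0 < x i)
    (hm : x i ≤ q i + t m) :
    deg (half x) (i :: L) (sweep (fun k => shift i (t k)) m G) = deg (half x) L G := by
  have hconst : G ∈ on (within {v | ∀ k, half x i (shift i (t k) v) =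
      if x i ≤ q i + t k then 1 else 0}) := by
    refine on_mono (fun l hl v hv k => ?_) hG
    rw [half, shift_apply_self, show v i = q i from hl v hv]
  rw [deg_cons_sweep (b := half x) (s := fun k => if x i ≤ q i + t k then 1 else 0) hGn hconst,
    if_neg h0.not_ge, if_pos hm, zero_add, one_mul]
  intro k j hj
  ext v
  simp only [half, Function.comp_apply, shift_apply_of_ne (ne_of_mem_of_not_mem hj hi)]

end

variable [Fintype ι]

/-- `G` is a fine subdivision of the face through `q` spanned by the directions in `L` of the cube
with centre `q` and radius `R`. Only its local degrees are recorded: they are `1` at the points of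
the open cube. -/
structure IsFundamental (L : List ι) (q : ι → ℝ) (R η : ℝ) (G : TupleChain (ι → ℝ)) : Prop where
  mem_len : G ∈ on (len _ (L.length + 1))
  mem_small : G ∈ on (small η)
  mem_within : G ∈ on (within (Metric.closedBall q R))
  mem_slab : G ∈ on (within (slab q 0 L))
  bdry_mem : bdry G ∈ on (within (far q R))
  deg_eq : ∀ x, (∀ i ∈ L, |x i - q i| < R) → deg (half x) L G = 1

theorem isFundamental_nil (q : ι → ℝ) {R η : ℝ} (hR : 0 ≤ R) (hη : 0 ≤ η) :
    IsFundamental [] q R η (tup [q]) where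
  mem_len := tup_mem_on rfl
  mem_small := tup_mem_on fun v hv w hw => by
    rwa [List.mem_singleton.1 hv, List.mem_singleton.1 hw, dist_self]
  mem_within := tup_mem_on fun v hv => by
    rw [List.mem_singleton.1 hv]
    exact Metric.mem_closedBall_self hR
  mem_slab := tup_mem_on fun v hv j _ => by
    rw [List.mem_singleton.1 hv, sub_self, abs_zero]
  bdry_mem := by
    rw [bdry_tup_cons, bdry_nil, map_zero, add_zero]
    exact tup_mem_on (s := within (far q R)) fun v hv => by simp at hv
  deg_eq x _ := by simp [deg_apply]

theorem shift_mem_closedBall [DecidableEq ι] {q x : ι → ℝ} {R t : ℝ} {i : ι}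
    (ht : |t| ≤ R) (hx : x ∈ Metric.closedBall q R) (hxi : x i = q i) :
    shift i t x ∈ Metric.closedBall q R := by
  have hR : 0 ≤ R := (abs_nonneg t).trans ht
  refine (dist_pi_le_iff hR).2 fun j => ?_
  rcases eq_or_ne j i with rfl | hji
  · rwa [shift_apply_self, hxi, Real.dist_eq, add_sub_cancel_left]
  · rw [shift_apply_of_ne hji]
    exact (dist_le_pi_dist x q j).trans hx

theorem exists_isFundamental_cons {q : ι → ℝ} {R η : ℝ} {i : ι} {L : List ι}
    {G : TupleChain (ι → ℝ)} (hR : 0 < R) (hη : 0 < η) (hi : i ∉ L)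
    (hG : IsFundamental L q R (η / 2) G) :
    ∃ G', IsFundamental (i :: L) q R η G' := by
  classical
  obtain ⟨t, m, ht0, htm, ht, hstep⟩ := exists_steps (T := 2 * R) (by positivity) (half_pos hη)
  let S : ℕ → (ι → ℝ) → ι → ℝ := fun k => shift i (t k - R)
  have hGi : G ∈ on (within {v | v i = q i}) :=
    on_mono (within_mono (slab_zero_subset hi)) hG.mem_slab
  have hend {k : ℕ} (hk : R ≤ |t k - R|) : push (S k) G ∈ on (within (far q R)) :=
    push_mem_within (A := {v : ι → ℝ | v i = q i}) (B := far q R) (S k) (fun x hx =>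
      ⟨i, by rwa [show S k x i - q i = t k - R by simp [S, hx.out]]⟩) hGi
  refine ⟨sweep S m G, ⟨sweep_mem_len S m hG.mem_len, ?_, ?_, ?_, ?_, fun x hx => ?_⟩⟩
  · have hiso : ∀ k x y, dist (S k x) (S k y) ≤ dist x y := fun k x y =>
      (dist_shift_shift i (t k - R) x y).le
    have hdist : ∀ k x, dist (S k x) (S (k + 1) x) ≤ η / 2 := fun k x => by
      rw [dist_shift_shift_same, sub_sub_sub_cancel_right]
      exact hstep k
    have := sweep_mem_small (m := m) hiso hdist hG.mem_small
    rwa [add_halves] at this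
  · exact sweep_mem_within (A := Metric.closedBall q R ∩ {v | v i = q i})
      (fun k _ x hx => shift_mem_closedBall
        (abs_le.2 ⟨by linarith [(ht k).1], by linarith [(ht k).2]⟩) hx.1 hx.2)
      (mem_within_inter hG.mem_within hGi)
  · exact sweep_mem_within (fun k _ x hx => shift_mem_slab List.mem_cons_self
      (slab_subset_slab_cons q 0 i L hx)) hG.mem_slab
  · rw [bdry_sweep]
    refine add_mem (add_mem (hend ?_) (hend ?_)) (sweep_mem_within
      (A := far q R ∩ {v | v i = q i}) (fun k _ x hx => shift_mem_far_of_eq _ hR hx.1 hx.2)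
      (mem_within_inter hG.bdry_mem (bdry_mem (isHereditary_within _) hGi)))
    · rw [ht0, zero_sub, abs_neg]
      exact le_abs_self R
    · rw [htm, two_mul, add_sub_cancel_right]
      exact le_abs_self R
  · have hxi := abs_lt.1 (hx i (by simp))
    rw [← hG.deg_eq x fun j hj => hx j (by simp [hj])]
    exact deg_half_cons_sweep_shift hi hG.mem_len hGi (by linarith) (by linarith)

theorem exists_isFundamental {L : List ι} (hL : L.Nodup) (q : ι → ℝ) {R η : ℝ} (hR : 0 < R)
    (hη : 0 < η) : ∃ G, IsFundamental L q R η G := by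
  classical
  induction L generalizing η with
  | nil => exact ⟨_, isFundamental_nil q hR.le hη.le⟩
  | cons i L ih =>
    obtain ⟨hi, hL⟩ := List.nodup_cons.1 hL
    obtain ⟨G, hG⟩ := ih hL (half_pos hη)
    exact exists_isFundamental_cons hR hη hi hG

end Fundamental

/-! ### The diagonal class on pairs of tuples -/

section Diagonal

/-- Mod 2 chains on pairs of tuples, the tensor product of two augmented complexes. -/
abbrev PairChain (X Y : Type*) := List X × List Y →₀ ZMod 2

/-- The external product of two chains. -/
def tensor : TupleChain X →ₗ[ZMod 2] TupleChain Y →ₗ[ZMod 2] PairChain X Y :=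
  linearCombination (ZMod 2) fun σ => lmapDomain _ _ (Prod.mk σ)

@[simp] theorem tensor_tup (σ : List X) (τ : List Y) : tensor (tup σ) (tup τ) = tup (σ, τ) := by
  simp [tensor]

theorem tensor_ext {V : Type*} [AddCommMonoid V] [Module (ZMod 2) V]
    {S T : TupleChain X →ₗ[ZMod 2] TupleChain Y →ₗ[ZMod 2] V}
    (h : ∀ σ τ, S (tup σ) (tup τ) = T (tup σ) (tup τ)) : S = T :=
  hom_ext fun σ => hom_ext fun τ => h σ τ

theorem tensor_mem {s : Set (List X)} {t : Set (List Y)} {r : Set (List X × List Y)}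
    (h : ∀ σ ∈ s, ∀ τ ∈ t, (σ, τ) ∈ r) {c : TupleChain X} {d : TupleChain Y} (hc : c ∈ on s)
    (hd : d ∈ on t) : tensor c d ∈ on r := by
  refine map_mem_of_on (tensor.flip d) (fun σ hσ => ?_) hc
  refine map_mem_of_on (tensor (tup σ)) (fun τ hτ => ?_) hd
  rw [tensor_tup]
  exact tup_mem_on (h σ hσ τ hτ)

/-- Exchange the two factors. -/
def swap : PairChain X Y →ₗ[ZMod 2] PairChain Y X := lmapDomain _ _ Prod.swap

@[simp] theorem swap_tup (p : List X × List Y) : swap (tup p) = tup p.swap := by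
  simp [swap]

@[simp] theorem swap_tensor (c : TupleChain X) (d : TupleChain Y) :
    swap (tensor c d) = tensor d c := by
  have : (tensor (X := X) (Y := Y)).compr₂ swap = tensor.flip := tensor_ext fun σ τ => by
    simp only [LinearMap.compr₂_apply, LinearMap.flip_apply, tensor_tup, swap_tup,
      Prod.swap_prod_mk]
  exact LinearMap.congr_fun (LinearMap.congr_fun this c) d

/-- The boundary operator of the tensor product. -/
def bdry₂ : PairChain X Y →ₗ[ZMod 2] PairChain X Y :=
  linearCombination (ZMod 2) fun p =>
    tensor (bdry (tup p.1)) (tup p.2) + tensor (tup p.1) (bdry (tup p.2))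

theorem bdry₂_tensor (c : TupleChain X) (d : TupleChain Y) :
    bdry₂ (tensor c d) = tensor (bdry c) d + tensor c (bdry d) := by
  have : (tensor (X := X) (Y := Y)).compr₂ bdry₂ = tensor ∘ₗ bdry + tensor.compl₂ bdry :=
    tensor_ext fun σ τ => by
      simp only [LinearMap.compr₂_apply, LinearMap.add_apply, LinearMap.comp_apply,
        LinearMap.compl₂_apply, tensor_tup, bdry₂, linearCombination_single, one_smul]
  exact LinearMap.congr_fun (LinearMap.congr_fun this c) d

@[simp] theorem bdry₂_bdry₂ (z : PairChain X Y) : bdry₂ (bdry₂ z) = 0 := by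
  have : bdry₂ ∘ₗ bdry₂ = (0 : PairChain X Y →ₗ[ZMod 2] PairChain X Y) := hom_ext fun p => by
    rw [LinearMap.comp_apply, ← tensor_tup, bdry₂_tensor, map_add, bdry₂_tensor, bdry₂_tensor,
      bdry_bdry, bdry_bdry, map_zero, map_zero, LinearMap.zero_apply, LinearMap.zero_apply,
      zero_add, add_zero, ZModModule.add_self]
  exact LinearMap.congr_fun this z

theorem bdry₂_swap (z : PairChain X Y) : bdry₂ (swap z) = swap (bdry₂ z) := by
  have : bdry₂ ∘ₗ swap = swap ∘ₗ (bdry₂ : PairChain X Y →ₗ[ZMod 2] _) := hom_ext fun p => by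
    simp only [LinearMap.comp_apply]
    rw [← tensor_tup, swap_tensor, bdry₂_tensor, bdry₂_tensor, map_add, swap_tensor, swap_tensor,
      add_comm]
  exact LinearMap.congr_fun this z

/-- Concatenation of the two tuples of a pair. -/
def append : PairChain X X →ₗ[ZMod 2] TupleChain X := lmapDomain _ _ fun p => p.1 ++ p.2

@[simp] theorem append_tup (p : List X × List X) : append (tup p) = tup (p.1 ++ p.2) := by
  simp [append]

theorem append_tensor_nil_left (c : TupleChain X) : append (tensor (tup []) c) = c := by
  have : append ∘ₗ tensor (tup []) = (LinearMap.id : TupleChain X →ₗ[ZMod 2] _) :=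
    hom_ext fun τ => by simp
  exact LinearMap.congr_fun this c

theorem append_tensor_nil_right (c : TupleChain X) : append (tensor c (tup [])) = c := by
  have : append ∘ₗ tensor.flip (tup []) = (LinearMap.id : TupleChain X →ₗ[ZMod 2] _) :=
    hom_ext fun τ => by simp
  exact LinearMap.congr_fun this c

theorem append_tensor_cons (x : X) (c d : TupleChain X) :
    append (tensor (cons x c) d) = cons x (append (tensor c d)) := by
  have : (tensor.compr₂ append) ∘ₗ cons x = tensor.compr₂ (cons x ∘ₗ append) :=
    tensor_ext fun σ τ => by simp
  exact LinearMap.congr_fun (LinearMap.congr_fun this c) d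

theorem bdry_append (z : PairChain X X) : bdry (append z) = append (bdry₂ z) := by
  have : bdry ∘ₗ append = append ∘ₗ (bdry₂ : PairChain X X →ₗ[ZMod 2] _) := hom_ext fun p => by
    obtain ⟨σ, τ⟩ := p
    simp only [LinearMap.comp_apply]
    rw [← tensor_tup, bdry₂_tensor, map_add]
    induction σ with
    | nil => rw [append_tensor_nil_left, append_tensor_nil_left, bdry_nil, map_zero,
        LinearMap.zero_apply, map_zero, zero_add]
    | cons x σ ih => rw [← cons_tup, append_tensor_cons, bdry_cons, ih, bdry_cons, map_add,
        map_add tensor, LinearMap.add_apply, map_add, append_tensor_cons, append_tensor_cons,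
        add_assoc]
  exact LinearMap.congr_fun this z

/-- Multiply each pair of tuples by the value of `a` at their first vertices. -/
def cap₂ (a : X → Y → ZMod 2) : PairChain X Y →ₗ[ZMod 2] PairChain X Y :=
  linearCombination (ZMod 2) fun p =>
    (p.1.head?.elim 0 fun x => p.2.head?.elim 0 (a x)) • tup p

theorem cap₂_nil_left (a : X → Y → ZMod 2) (d : TupleChain Y) :
    cap₂ a (tensor (tup []) d) = 0 := by
  have : cap₂ a ∘ₗ tensor (tup []) = 0 := hom_ext fun τ => by simp [cap₂]
  exact LinearMap.congr_fun this d

theorem cap₂_cons_left (a : X → Y → ZMod 2) (x : X) (σ : List X) (d : TupleChain Y) :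
    cap₂ a (tensor (tup (x :: σ)) d) = tensor (tup (x :: σ)) (cap (a x) d) := by
  have : cap₂ a ∘ₗ tensor (tup (x :: σ)) = tensor (tup (x :: σ)) ∘ₗ cap (a x) :=
    hom_ext fun τ => by cases τ <;> simp [cap₂, -smul_single]
  exact LinearMap.congr_fun this d

theorem cap₂_swap (a : X → Y → ZMod 2) (z : PairChain Y X) :
    cap₂ a (swap z) = swap (cap₂ (fun y x => a x y) z) := by
  have : cap₂ a ∘ₗ swap = swap ∘ₗ cap₂ (fun y x => a x y) := hom_ext fun p => by
    obtain ⟨τ, σ⟩ := p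
    cases σ <;> cases τ <;> simp [cap₂, -smul_single]
  exact LinearMap.congr_fun this z

theorem cap₂_cons_right (a : X → Y → ZMod 2) (c : TupleChain X) (y : Y) (τ : List Y) :
    cap₂ a (tensor c (tup (y :: τ))) = tensor (cap (a · y) c) (tup (y :: τ)) := by
  rw [← swap_tensor, cap₂_swap, cap₂_cons_left, swap_tensor]

/-- The cap product with the coboundary of `a`, as the commutator of `cap₂ a` with `bdry₂`. -/
def dcap₂ (a : X → Y → ZMod 2) : PairChain X Y →ₗ[ZMod 2] PairChain X Y :=
  bdry₂ ∘ₗ cap₂ a + cap₂ a ∘ₗ bdry₂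

theorem dcap₂_apply (a : X → Y → ZMod 2) (z : PairChain X Y) :
    dcap₂ a z = bdry₂ (cap₂ a z) + cap₂ a (bdry₂ z) := rfl

theorem bdry₂_dcap₂ (a : X → Y → ZMod 2) (z : PairChain X Y) :
    bdry₂ (dcap₂ a z) = dcap₂ a (bdry₂ z) := by
  simp [dcap₂_apply]

theorem dcap₂_swap (a : X → Y → ZMod 2) (z : PairChain Y X) :
    dcap₂ a (swap z) = swap (dcap₂ (fun y x => a x y) z) := by
  simp only [dcap₂_apply, cap₂_swap, bdry₂_swap, map_add]

theorem dcap₂_nil_left (a : X → Y → ZMod 2) (d : TupleChain Y) :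
    dcap₂ a (tensor (tup []) d) = 0 := by
  rw [dcap₂_apply, bdry₂_tensor, bdry_nil, map_zero, LinearMap.zero_apply, zero_add,
    cap₂_nil_left, cap₂_nil_left, map_zero, add_zero]

theorem dcap₂_nil_right (a : X → Y → ZMod 2) (c : TupleChain X) :
    dcap₂ a (tensor c (tup [])) = 0 := by
  rw [← swap_tensor, dcap₂_swap, dcap₂_nil_left, map_zero]

theorem dcap₂_cons_cons (a : X → Y → ZMod 2) (x : X) (σ : List X) (y : Y) (τ : List Y) :
    dcap₂ a (tensor (tup (x :: σ)) (tup (y :: τ))) =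
      tensor (dcap (a · y) (tup (x :: σ))) (tup (y :: τ)) +
        tensor (tup (x :: σ)) (dcap (a x) (tup (y :: τ))) := by
  have h : tensor (cap (a · y) (tup (x :: σ))) (bdry (tup (y :: τ))) =
      tensor (tup (x :: σ)) (bdry (cap (a x) (tup (y :: τ)))) := by
    rw [cap_tup_cons, cap_tup_cons, map_smul, map_smul, map_smul, LinearMap.smul_apply]
  rw [dcap₂_apply, bdry₂_tensor, map_add (cap₂ a), cap₂_cons_right, cap₂_cons_right,
    cap₂_cons_left, bdry₂_tensor, dcap_apply, dcap_apply, map_add tensor, map_add (tensor _),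
    LinearMap.add_apply, h, add_add_add_comm]

/-- Iterated cap products with coboundaries on pairs. -/
def dcaps₂ (a : ι → X → Y → ZMod 2) : List ι → PairChain X Y →ₗ[ZMod 2] PairChain X Y
  | [] => LinearMap.id
  | i :: L => dcaps₂ a L ∘ₗ dcap₂ (a i)

theorem dcaps₂_nil (a : ι → X → Y → ZMod 2) (z : PairChain X Y) : dcaps₂ a [] z = z := rfl

theorem dcaps₂_cons (a : ι → X → Y → ZMod 2) (i : ι) (L : List ι) (z : PairChain X Y) :
    dcaps₂ a (i :: L) z = dcaps₂ a L (dcap₂ (a i) z) := rfl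

theorem bdry₂_dcaps₂ (a : ι → X → Y → ZMod 2) (L : List ι) (z : PairChain X Y) :
    bdry₂ (dcaps₂ a L z) = dcaps₂ a L (bdry₂ z) := by
  induction L generalizing z with
  | nil => rfl
  | cons i L ih => rw [dcaps₂_cons, dcaps₂_cons, ih, bdry₂_dcap₂]

theorem dcaps₂_swap (a : ι → X → Y → ZMod 2) (L : List ι) (z : PairChain Y X) :
    dcaps₂ a L (swap z) = swap (dcaps₂ (fun i y x => a i x y) L z) := by
  induction L generalizing z with
  | nil => rfl
  | cons i L ih => rw [dcaps₂_cons, dcaps₂_cons, dcap₂_swap, ih]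

/-- The function `a` takes two distinct values on `σ × τ`. -/
def Varies (a : X → Y → ZMod 2) (σ : List X) (τ : List Y) : Prop :=
  ∃ x ∈ σ, ∃ y ∈ τ, ∃ x' ∈ σ, ∃ y' ∈ τ, a x y ≠ a x' y'

theorem Varies.mono {a : X → Y → ZMod 2} {σ σ' : List X} {τ τ' : List Y} (hσ : σ'.Sublist σ)
    (hτ : τ'.Sublist τ) (h : Varies a σ' τ') : Varies a σ τ := by
  obtain ⟨x, hx, y, hy, x', hx', y', hy', h⟩ := h
  exact ⟨x, hσ.subset hx, y, hτ.subset hy, x', hσ.subset hx', y', hτ.subset hy', h⟩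

theorem Varies.symm {a : X → Y → ZMod 2} {σ : List X} {τ : List Y} (h : Varies a σ τ) :
    Varies (fun y x => a x y) τ σ := by
  obtain ⟨x, hx, y, hy, x', hx', y', hy', h⟩ := h
  exact ⟨y, hy, x, hx, y', hy', x', hx', h⟩

/-- The pairs of tuples that can occur in `dcaps₂ a L (tup p)`. -/
def reductions (a : ι → X → Y → ZMod 2) (L : List ι) (p : List X × List Y) :
    Set (List X × List Y) :=
  {q | q.1.Sublist p.1 ∧ q.2.Sublist p.2 ∧
    q.1.length + q.2.length + L.length = p.1.length + p.2.length ∧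
      (q.1 = [] ∨ q.2 = [] ∨ ∀ i ∈ L, Varies (a i) p.1 p.2)}

theorem dcap₂_tup_mem (a : ι → X → Y → ZMod 2) (i : ι) (p : List X × List Y) :
    dcap₂ (a i) (tup p) ∈ on (reductions a [i] p) := by
  match p with
  | ([], τ) => rw [← tensor_tup, dcap₂_nil_left]; exact zero_mem _
  | (σ, []) => rw [← tensor_tup, dcap₂_nil_right]; exact zero_mem _
  | (x :: σ, y :: τ) =>
    rw [← tensor_tup, dcap₂_cons_cons]
    refine add_mem (tensor_mem ?_ (dcap_tup_mem _ _) (tup_mem_on (Set.mem_singleton _)))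
      (tensor_mem ?_ (tup_mem_on (Set.mem_singleton _)) (dcap_tup_mem _ _))
    · rintro σ' ⟨hs, hl, h⟩ _ rfl
      refine ⟨hs, List.Sublist.refl _, by simp only [List.length_cons, List.length_nil] at *; omega,
        h.imp_right fun ⟨v, hv, w, hw, hne⟩ => Or.inr fun j hj => ?_⟩
      obtain rfl := List.mem_singleton.1 hj
      exact ⟨v, hv, y, by simp, w, hw, y, by simp, hne⟩
    · rintro _ rfl τ' ⟨hs, hl, h⟩
      refine ⟨List.Sublist.refl _, hs, by simp only [List.length_cons, List.length_nil] at *; omega,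
        Or.inr (h.imp_right fun ⟨v, hv, w, hw, hne⟩ j hj => ?_)⟩
      obtain rfl := List.mem_singleton.1 hj
      exact ⟨x, by simp, v, hv, x, by simp, w, hw, hne⟩

theorem dcaps₂_tup_mem (a : ι → X → Y → ZMod 2) (L : List ι) (p : List X × List Y) :
    dcaps₂ a L (tup p) ∈ on (reductions a L p) := by
  induction L generalizing p with
  | nil => exact tup_mem_on ⟨List.Sublist.refl _, List.Sublist.refl _, rfl, by simp⟩
  | cons i L ih =>
    refine map_mem_of_on (dcaps₂ a L) (fun q hq => on_mono (fun r hr => ?_) (ih q))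
      (dcap₂_tup_mem a i p)
    obtain ⟨h₁, h₂, hl, hv⟩ := hq
    obtain ⟨g₁, g₂, gl, gv⟩ := hr
    refine ⟨g₁.trans h₁, g₂.trans h₂,
      by simp only [List.length_cons, List.length_nil] at *; omega, ?_⟩
    rcases hv with hv | hv | hv
    · exact Or.inl (List.sublist_nil.1 (hv ▸ g₁))
    · exact Or.inr (Or.inl (List.sublist_nil.1 (hv ▸ g₂)))
    · refine gv.imp_right (Or.imp_right fun gv j hj => ?_)
      rcases List.mem_cons.1 hj with rfl | hj
      exacts [hv j (by simp), (gv j hj).mono h₁ h₂]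

theorem dcaps₂_mem_length_lt (a : ι → X → Y → ZMod 2) (L : List ι) {n : ℕ} {z : PairChain X Y}
    (hz : z ∈ on {p | p.2.length < n}) : dcaps₂ a L z ∈ on {p | p.2.length < n} :=
  map_mem_of_on _ (fun p hp => on_mono (fun _ hq => hq.2.1.length_le.trans_lt hp)
    (dcaps₂_tup_mem a L p)) hz

theorem dcap₂_tensor_add_mem (a : X → Y → ZMod 2) (c : TupleChain X) (y : Y) (τ : List Y) :
    dcap₂ a (tensor c (tup (y :: τ))) + tensor (dcap (a · y) c) (tup (y :: τ)) ∈
      on {p | p.2.length < (y :: τ).length} := by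
  refine map_mem_of_on (s := Set.univ) (dcap₂ a ∘ₗ tensor.flip (tup (y :: τ)) +
    tensor.flip (tup (y :: τ)) ∘ₗ dcap (a · y)) (fun σ _ => ?_) (by simp [on])
  simp only [LinearMap.add_apply, LinearMap.comp_apply, LinearMap.flip_apply]
  cases σ with
  | nil =>
    rw [dcap₂_nil_left, dcap_nil, map_zero, LinearMap.zero_apply, add_zero]
    exact zero_mem _
  | cons x σ =>
    rw [dcap₂_cons_cons, add_right_comm, ZModModule.add_self, zero_add]
    refine tensor_mem ?_ (tup_mem_on (Set.mem_singleton _)) (dcap_tup_mem _ _)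
    rintro _ _ τ' ⟨-, h, -⟩
    exact Nat.lt_of_succ_le h.le

theorem dcaps₂_tensor_add_mem (a : ι → X → Y → ZMod 2) (L : List ι) (c : TupleChain X) (y : Y)
    (τ : List Y) :
    dcaps₂ a L (tensor c (tup (y :: τ))) +
      tensor (dcaps (fun i x => a i x y) L c) (tup (y :: τ)) ∈
        on {p | p.2.length < (y :: τ).length} := by
  induction L generalizing c with
  | nil =>
    rw [dcaps₂_nil, dcaps_nil, ZModModule.add_self]
    exact zero_mem _
  | cons i L ih =>
    have h := add_mem (dcaps₂_mem_length_lt a L (dcap₂_tensor_add_mem (a i) c y τ))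
      (ih (dcap (fun x => a i x y) c))
    rwa [map_add, add_assoc, ← add_assoc (dcaps₂ a L (tensor (dcap _ _) _)), ZModModule.add_self,
      zero_add] at h

theorem eq_smul_of_mem_nil {c : TupleChain X} (hc : c ∈ on {[]}) : c = c [] • tup [] := by
  ext l
  by_cases hl : l = []
  · simp [hl]
  · have : c l = 0 := Finsupp.notMem_support_iff.1 fun h' => hl (hc h')
    simp [this, hl]

/-- The pairs of nonempty tuples extracted from tuples in `s` and `t` between which every `a i`,
`i ∈ L`, varies. -/
def mixed (a : ι → X → Y → ZMod 2) (L : List ι) (s : Set (List X)) (t : Set (List Y)) :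
    Set (List X × List Y) :=
  {p | ∃ σ ∈ s, ∃ τ ∈ t, p.1.Sublist σ ∧ p.2.Sublist τ ∧ p.1 ≠ [] ∧ p.2 ≠ [] ∧
    ∀ i ∈ L, Varies (a i) σ τ}

theorem dcaps₂_tup_add_mem (a : ι → X → Y → ZMod 2) {L : List ι} {s : Set (List X)}
    {t : Set (List Y)} {σ : List X} {y : Y} {τ : List Y} (hσ : σ ∈ len X L.length ∩ s)
    (hτ : y :: τ ∈ len Y (L.length + 1) ∩ t) :
    dcaps₂ a L (tup (σ, y :: τ)) +
      dcaps (fun i x => a i x y) L (tup σ) [] • tup ([], y :: τ) ∈ on (mixed a L s t) := by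
  have hnil := eq_smul_of_mem_nil (c := dcaps (fun i x => a i x y) L (tup σ)) (by
    rw [← len_zero]
    exact dcaps_mem_len _ L (by rw [zero_add]; exact tup_mem_on hσ.1))
  have hlt := dcaps₂_tensor_add_mem a L (tup σ) y τ
  rw [hnil, map_smul, LinearMap.smul_apply, tensor_tup, tensor_tup] at hlt
  have hred := add_mem (dcaps₂_tup_mem a L (σ, y :: τ)) (Submodule.smul_mem _
    (dcaps (fun i x => a i x y) L (tup σ) []) (tup_mem_on (l := ([], y :: τ))
      (s := reductions a L (σ, y :: τ)) ⟨by simp, List.Sublist.refl _, ?_, Or.inl rfl⟩))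
  · refine on_mono ?_ (mem_on_inter hlt hred)
    rintro q ⟨hq, h₁, h₂, hl, hv⟩
    have hσl := hσ.1.out
    have hτl := hτ.1.out
    have hq₁ : q.1 ≠ [] := fun h => by
      rw [h] at hl
      simp only [List.length_nil, Set.mem_ofPred_eq] at *
      omega
    have hq₂ : q.2 ≠ [] := fun h => by
      have := h₁.length_le
      rw [h] at hl
      simp only [List.length_nil] at *
      omega
    exact ⟨σ, hσ.2, y :: τ, hτ.2, h₁, h₂, hq₁, hq₂, (hv.resolve_left hq₁).resolve_left hq₂⟩
  · have hσl := hσ.1.out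
    simp only [List.length_nil]
    omega

theorem dcaps₂_tensor_left_mem (a : ι → X → Y → ZMod 2) {L : List ι} {s : Set (List X)}
    {t : Set (List Y)} {b : TupleChain X} {G : TupleChain Y} (hb : b ∈ on (len X L.length ∩ s))
    (hG : G ∈ on (len Y (L.length + 1) ∩ t)) :
    dcaps₂ a L (tensor b G) +
      tensor (tup []) (cap (fun y => dcaps (fun i x => a i x y) L b []) G) ∈
        on (mixed a L s t) := by
  refine map_mem_of_on (dcaps₂ a L ∘ₗ tensor b + tensor (tup []) ∘ₗ cap _) (fun τ hτ => ?_) hG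
  match τ, hτ with
  | [], hτ => simp [len] at hτ
  | y :: τ, hτ =>
    simp only [LinearMap.add_apply, LinearMap.comp_apply, cap_tup_cons, map_smul, tensor_tup]
    refine map_mem_of_on (dcaps₂ a L ∘ₗ tensor.flip (tup (y :: τ)) +
      (lapply [] ∘ₗ dcaps (fun i x => a i x y) L).smulRight (tup ([], y :: τ))) (fun σ hσ => ?_) hb
    simp only [LinearMap.add_apply, LinearMap.comp_apply, LinearMap.flip_apply, tensor_tup,
      LinearMap.smulRight_apply, lapply_apply]
    exact dcaps₂_tup_add_mem a hσ hτ

theorem dcaps₂_tensor_right_mem (a : ι → X → Y → ZMod 2) {L : List ι} {s : Set (List X)}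
    {t : Set (List Y)} {w : TupleChain X} {g : TupleChain Y}
    (hw : w ∈ on (len X (L.length + 1) ∩ s)) (hg : g ∈ on (len Y L.length ∩ t)) :
    dcaps₂ a L (tensor w g) +
      tensor (cap (fun x => dcaps (fun i => a i x) L g []) w) (tup []) ∈ on (mixed a L s t) := by
  have := map_mem_of_on (t := on (mixed a L s t)) swap ?_
    (dcaps₂_tensor_left_mem (fun i y x => a i x y) hg hw)
  · rwa [map_add, ← dcaps₂_swap, swap_tensor, swap_tensor] at this
  · rintro p ⟨τ, hτ, σ, hσ, h₂, h₁, hp₂, hp₁, hv⟩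
    rw [swap_tup]
    exact tup_mem_on ⟨σ, hσ, τ, hτ, h₁, h₂, hp₁, hp₂, fun i hi => (hv i hi).symm⟩

/-- The cap product of the external product of two chains with the cup product of the coboundaries
of the `a i`, as a chain on concatenated tuples. For `a = half` this cup product is the pullback to
`ℝⁿ × ℝⁿ` of the class of the diagonal. -/
def cross (a : ι → X → X → ZMod 2) (L : List ι) (c d : TupleChain X) : TupleChain X :=
  append (dcaps₂ a L (tensor c d))

theorem bdry_cross (a : ι → X → X → ZMod 2) (L : List ι) (c d : TupleChain X) :
    bdry (cross a L c d) = cross a L (bdry c) d + cross a L c (bdry d) := by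
  rw [cross, bdry_append, bdry₂_dcaps₂, bdry₂_tensor, map_add, map_add, ← cross, ← cross]

theorem append_mem {r : Set (List X × List X)} {s : Set (List X)} (h : ∀ p ∈ r, p.1 ++ p.2 ∈ s)
    {z : PairChain X X} (hz : z ∈ on r) : append z ∈ on s :=
  map_mem_of_on _ (fun p hp => by rw [append_tup]; exact tup_mem_on (h p hp)) hz

theorem cross_left_mem (a : ι → X → X → ZMod 2) {L : List ι} {s t r : Set (List X)}
    (hr : ∀ p ∈ mixed a L s t, p.1 ++ p.2 ∈ r) {b G : TupleChain X}
    (hb : b ∈ on (len X L.length ∩ s)) (hG : G ∈ on (len X (L.length + 1) ∩ t)) :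
    cross a L b G + cap (fun x => dcaps (fun i y => a i y x) L b []) G ∈ on r := by
  rw [← append_tensor_nil_left (cap _ G), cross, ← map_add]
  exact append_mem hr (dcaps₂_tensor_left_mem a hb hG)

theorem cross_right_mem (a : ι → X → X → ZMod 2) {L : List ι} {s t r : Set (List X)}
    (hr : ∀ p ∈ mixed a L s t, p.1 ++ p.2 ∈ r) {w g : TupleChain X}
    (hw : w ∈ on (len X (L.length + 1) ∩ s)) (hg : g ∈ on (len X L.length ∩ t)) :
    cross a L w g + cap (fun y => dcaps (fun i => a i y) L g []) w ∈ on r := by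
  rw [← append_tensor_nil_right (cap _ w), cross, ← map_add]
  exact append_mem hr (dcaps₂_tensor_right_mem a hw hg)

theorem mixed_mono (a : ι → X → Y → ZMod 2) (L : List ι) {s s' : Set (List X)}
    {t t' : Set (List Y)} (hs : s ⊆ s') (ht : t ⊆ t') : mixed a L s t ⊆ mixed a L s' t' :=
  fun _ ⟨σ, hσ, τ, hτ, h⟩ => ⟨σ, hs hσ, τ, ht hτ, h⟩

section Localization

open Metric

variable [Fintype ι] {L : List ι} {ε η : ℝ}

theorem dist_le_of_varies (hL : ∀ i, i ∈ L) (hε : 0 ≤ ε) (hη : 0 ≤ η)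
    {σ τ : List (ι → ℝ)} (hσ : σ ∈ small ε) (hτ : τ ∈ small η)
    (h : ∀ i ∈ L, Varies (fun y => half y i) σ τ) {y x : ι → ℝ} (hy : y ∈ σ) (hx : x ∈ τ) :
    dist y x ≤ ε + η := by
  refine (dist_pi_le_iff (by linarith)).2 fun i => ?_
  have key : ∀ y₁ ∈ σ, ∀ x₁ ∈ τ, ∀ y₂ ∈ σ, ∀ x₂ ∈ τ, y₁ i ≤ x₁ i → ¬ y₂ i ≤ x₂ i →
      dist (y i) (x i) ≤ ε + η := by
    intro y₁ hy₁ x₁ hx₁ y₂ hy₂ x₂ hx₂ h1 h2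
    have d1 := abs_le.1 ((dist_le_pi_dist y y₁ i).trans (hσ y hy y₁ hy₁))
    have d2 := abs_le.1 ((dist_le_pi_dist y y₂ i).trans (hσ y hy y₂ hy₂))
    have d3 := abs_le.1 ((dist_le_pi_dist x x₁ i).trans (hτ x hx x₁ hx₁))
    have d4 := abs_le.1 ((dist_le_pi_dist x x₂ i).trans (hτ x hx x₂ hx₂))
    rw [Real.dist_eq, abs_le]
    constructor <;> linarith
  obtain ⟨y₁, hy₁, x₁, hx₁, y₂, hy₂, x₂, hx₂, hne⟩ := h i (hL i)
  by_cases h1 : y₁ i ≤ x₁ i <;> by_cases h2 : y₂ i ≤ x₂ i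
  · simp [half, h1, h2] at hne
  · exact key _ hy₁ _ hx₁ _ hy₂ _ hx₂ h1 h2
  · exact key _ hy₂ _ hx₂ _ hy₁ _ hx₁ h2 h1
  · simp [half, h1, h2] at hne

theorem dist_le_of_mem_mixed (hL : ∀ i, i ∈ L) (hε : 0 ≤ ε) (hη : 0 ≤ η)
    {p : List (ι → ℝ) × List (ι → ℝ)}
    (hp : p ∈ mixed (fun i y => half y i) L (small ε) (small η)) {y x : ι → ℝ}
    (hy : y ∈ p.1) (hx : x ∈ p.2) : dist y x ≤ ε + η := by
  obtain ⟨σ, hσ, τ, hτ, h₁, h₂, -, -, hv⟩ := hp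
  exact dist_le_of_varies hL hε hη hσ hτ hv (h₁.subset hy) (h₂.subset hx)

theorem append_mem_small (hL : ∀ i, i ∈ L) (hε : 0 ≤ ε) (hη : 0 ≤ η)
    {p : List (ι → ℝ) × List (ι → ℝ)}
    (hp : p ∈ mixed (fun i y => half y i) L (small ε) (small η)) :
    p.1 ++ p.2 ∈ small (ε + η) := by
  have hd := fun {y x} => dist_le_of_mem_mixed hL hε hη hp (y := y) (x := x)
  obtain ⟨σ, hσ, τ, hτ, h₁, h₂, -⟩ := hp
  intro v hv w hw
  rcases List.mem_append.1 hv with hv | hv <;> rcases List.mem_append.1 hw with hw | hw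
  · exact (hσ v (h₁.subset hv) w (h₁.subset hw)).trans (by linarith)
  · exact hd hv hw
  · rw [dist_comm]; exact hd hw hv
  · exact (hτ v (h₂.subset hv) w (h₂.subset hw)).trans (by linarith)

theorem append_mem_within_left (hL : ∀ i, i ∈ L) (hε : 0 ≤ ε) (hη : 0 ≤ η) {A : Set (ι → ℝ)}
    {p : List (ι → ℝ) × List (ι → ℝ)}
    (hp : p ∈ mixed (fun i y => half y i) L (small ε ∩ within A) (small η)) :
    p.1 ++ p.2 ∈ within (cthickening (ε + η) A) := by
  have hd := fun {y x} => dist_le_of_mem_mixed hL hε hη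
    (mixed_mono _ _ Set.inter_subset_left subset_rfl hp) (y := y) (x := x)
  obtain ⟨σ, hσ, τ, -, h₁, -, hne, -⟩ := hp
  obtain ⟨y, hy⟩ := List.exists_mem_of_ne_nil _ hne
  intro v hv
  rcases List.mem_append.1 hv with hv | hv
  · exact self_subset_cthickening A (hσ.2 v (h₁.subset hv))
  · refine mem_cthickening_of_dist_le v y _ A (hσ.2 y (h₁.subset hy)) ?_
    rw [dist_comm]
    exact hd hy hv

theorem append_mem_within_right (hL : ∀ i, i ∈ L) (hε : 0 ≤ ε) (hη : 0 ≤ η) {F : Set (ι → ℝ)}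
    {p : List (ι → ℝ) × List (ι → ℝ)}
    (hp : p ∈ mixed (fun i y => half y i) L (small ε) (small η ∩ within F)) :
    p.1 ++ p.2 ∈ within (cthickening (ε + η) F) := by
  have hd := fun {y x} => dist_le_of_mem_mixed hL hε hη
    (mixed_mono _ _ subset_rfl Set.inter_subset_left hp) (y := y) (x := x)
  obtain ⟨σ, -, τ, hτ, -, h₂, -, hne, -⟩ := hp
  obtain ⟨x, hx⟩ := List.exists_mem_of_ne_nil _ hne
  intro v hv
  rcases List.mem_append.1 hv with hv | hv
  · exact mem_cthickening_of_dist_le v x _ F (hτ.2 x (h₂.subset hx)) (hd hv hx)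
  · exact self_subset_cthickening F (hτ.2 v (h₂.subset hv))

theorem exists_localization (hL : ∀ i, i ∈ L) (hε : 0 ≤ ε) (hη : 0 ≤ η)
    {w G P Q : TupleChain (ι → ℝ)} (hw : w ∈ on (len _ (L.length + 1) ∩ small ε))
    (hG : G ∈ on (len _ (L.length + 1) ∩ small η)) {A B F : Set (ι → ℝ)}
    (hP : P ∈ on (len _ L.length ∩ (small ε ∩ within A)))
    (hQ : Q ∈ on (len _ L.length ∩ (small ε ∩ within B)))
    (hwPQ : bdry w = P + Q) (hGF : bdry G ∈ on (within F)) :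
    ∃ N ∈ on (small (ε + η) ∩ within (cthickening (ε + η) A)),
      ∃ N' ∈ on (within (cthickening (ε + η) B ∪ cthickening (ε + η) F)),
        bdry (cap (fun x => deg (fun i y => half y i x) L w) G +
          cap (fun y => deg (half y) L G) w + N + N') = 0 := by
  have hbG : bdry G ∈ on (len _ L.length ∩ (small η ∩ within F)) :=
    mem_on_inter (bdry_mem_len (on_mono Set.inter_subset_left hG))
      (mem_on_inter (bdry_mem (isHereditary_small η) (on_mono Set.inter_subset_right hG)) hGF)
  have hN := cross_left_mem _ (r := small _ ∩ within _) (fun p hp => And.intro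
    (append_mem_small hL hε hη (mixed_mono _ _ Set.inter_subset_left subset_rfl hp))
    (append_mem_within_left hL hε hη hp)) hP hG
  have hN₁ := cross_left_mem _ (fun p hp => append_mem_within_left hL hε hη hp) hQ hG
  have hN₂ := cross_right_mem _ (fun p hp => append_mem_within_right hL hε hη hp) hw hbG
  refine ⟨_, hN, _, add_mem (on_mono (within_mono Set.subset_union_left) hN₁)
    (on_mono (within_mono Set.subset_union_right) hN₂), ?_⟩
  have hdegw : cap (fun x => deg (fun i y => half y i x) L w) G =
      cap (fun x => dcaps (fun i y => half y i x) L P []) G +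
        cap (fun x => dcaps (fun i y => half y i x) L Q []) G := by
    rw [← cap_add_apply]
    congr 2
    ext x
    rw [deg_eq_dcaps_bdry, hwPQ, map_add, Finsupp.add_apply, Pi.add_apply]
  have hbdry : bdry (cross (fun i y => half y i) L P G + cross (fun i y => half y i) L Q G +
      cross (fun i y => half y i) L w (bdry G)) = 0 := by
    rw [cross, cross, ← map_add append, ← map_add (dcaps₂ _ L), ← LinearMap.add_apply,
      ← map_add tensor, ← hwPQ, ← cross, ← bdry_cross, bdry_bdry]
  simp only [← hbdry, hdegw, deg_eq_dcaps_bdry _ L G]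
  congr 1
  abel_nf
  simp only [two_zsmul_eq_zero, zero_add]

end Localization

end Diagonal

/-! ### Degrees away from the boundary -/

/-- The homogeneous part of a chain formed by the tuples of length `n`. -/
def grade (n : ℕ) : TupleChain X →ₗ[ZMod 2] TupleChain X :=
  linearCombination (ZMod 2) fun l => if l.length = n then tup l else 0

theorem grade_tup (n : ℕ) (l : List X) : grade n (tup l) = if l.length = n then tup l else 0 := by
  simp [grade]

theorem grade_zero_cons (v : X) (c : TupleChain X) : grade 0 (cons v c) = 0 := by
  have h : grade 0 ∘ₗ cons v = (0 : TupleChain X →ₗ[ZMod 2] _) := hom_ext fun l => by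
    simp [grade_tup]
  exact LinearMap.congr_fun h c

theorem grade_succ_cons (n : ℕ) (v : X) (c : TupleChain X) :
    grade (n + 1) (cons v c) = cons v (grade n c) := by
  have h : grade (n + 1) ∘ₗ cons v = cons v ∘ₗ grade n := hom_ext fun l => by
    by_cases h : l.length = n <;> simp [grade_tup, h]
  exact LinearMap.congr_fun h c

theorem bdry_grade (n : ℕ) (c : TupleChain X) : bdry (grade (n + 1) c) = grade n (bdry c) := by
  suffices h : bdry ∘ₗ grade (n + 1) = grade n ∘ₗ (bdry : TupleChain X →ₗ[ZMod 2] _) from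
    LinearMap.congr_fun h c
  refine hom_ext fun l => ?_
  rw [LinearMap.comp_apply, LinearMap.comp_apply]
  induction l generalizing n with
  | nil => simp [grade_tup]
  | cons v l ih =>
    rw [← cons_tup, grade_succ_cons, bdry_cons, bdry_cons, map_add]
    cases n with
    | zero =>
      rw [grade_zero_cons, grade_tup]
      split_ifs with h
      · rw [List.length_eq_zero_iff.1 h, bdry_nil, map_zero]
      · rw [map_zero, map_zero]
    | succ n => rw [grade_succ_cons, ih]

theorem grade_mem (n : ℕ) {s : Set (List X)} {c : TupleChain X} (hc : c ∈ on s) :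
    grade n c ∈ on (len X n ∩ s) :=
  map_mem_of_on _ (fun l hl => by
    rw [grade_tup]
    split_ifs with h
    · exact tup_mem_on ⟨h, hl⟩
    · exact zero_mem _) hc

theorem grade_of_len {n : ℕ} {c : TupleChain X} (hc : c ∈ on (len X n)) : grade n c = c :=
  eq_of_on (grade n) LinearMap.id (fun l hl => by
    rw [grade_tup, if_pos hl.out, LinearMap.id_apply]) hc

/-- The indicators `a i` jump only across the coordinate hyperplanes through `x`. -/
def Cuts (a : ι → (ι → ℝ) → ZMod 2) (x : ι → ℝ) : Prop :=
  ∀ i v w, a i v ≠ a i w → |v i - x i| ≤ |v i - w i|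

theorem cuts_half (x : ι → ℝ) : Cuts (half x) x := fun _ _ _ h => abs_le_of_half_ne h

theorem cuts_half_flip (x : ι → ℝ) : Cuts (fun i v => half v i x) x := by
  intro i v w h
  simp only [half] at h
  by_cases hv : v i ≤ x i <;> by_cases hw : w i ≤ x i
  · simp [hv, hw] at h
  · rw [abs_of_nonpos (by linarith), abs_of_nonpos (by linarith)]
    linarith
  · rw [abs_of_pos (by linarith), abs_of_pos (by linarith)]
    linarith
  · simp [hv, hw] at h

theorem far_mono {p : ι → ℝ} {ρ ρ' : ℝ} (h : ρ' ≤ ρ) : far p ρ ⊆ far p ρ' :=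
  fun _ ⟨i, hi⟩ => ⟨i, h.trans hi⟩

theorem sub_mem_far {x v : ι → ℝ} {ρ : ℝ} : v - x ∈ far 0 ρ ↔ v ∈ far x ρ := by
  simp [far]

theorem within_subset_exists (A : Set X) : within A ⊆ {l | l = [] ∨ ∃ v ∈ l, v ∈ A} := by
  rintro (_ | ⟨v, l⟩) hl
  · exact Or.inl rfl
  · exact Or.inr ⟨v, by simp, hl v (by simp)⟩

theorem isClosed_far [Finite ι] (p : ι → ℝ) (ρ : ℝ) : IsClosed (far p ρ) := by
  have h : far p ρ = ⋃ i, {x | ρ ≤ |x i - p i|} := by ext; simp [far]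
  rw [h]
  exact isClosed_iUnion_of_finite fun i => isClosed_le continuous_const (by fun_prop)

section Far

variable [Fintype ι] {L : List ι} {p q x y : ι → ℝ} {ε ρ δ : ℝ}

theorem mem_far_of_dist (hx : x ∈ far p ρ) (h : dist x y ≤ δ) : y ∈ far p (ρ - δ) := by
  obtain ⟨i, hi⟩ := hx
  refine ⟨i, ?_⟩
  have hxy := (dist_le_pi_dist x y i).trans h
  have hsub := abs_sub_abs_le_abs_sub (x i - p i) (y i - p i)
  rw [sub_sub_sub_cancel_right, ← Real.dist_eq (x i) (y i)] at hsub
  linarith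

theorem mem_far_of_center (hx : x ∈ far p ρ) (h : dist p q ≤ δ) : x ∈ far q (ρ - δ) :=
  sub_mem_far.1 <| mem_far_of_dist (sub_mem_far.2 hx) (by rwa [dist_sub_left])

theorem cthickening_far_subset (hδ : 0 ≤ δ) :
    Metric.cthickening δ (far p ρ) ⊆ far p (ρ - δ) := by
  rw [(isClosed_far p ρ).cthickening_eq_biUnion_closedBall hδ]
  exact Set.iUnion₂_subset fun x hx y hy => mem_far_of_dist hx (by rwa [dist_comm])

variable {c : TupleChain (ι → ℝ)}

theorem deg_of_far {a : ι → (ι → ℝ) → ZMod 2} (ha : Cuts a x) (hL : ∀ i, i ∈ L) (hε : ε < ρ)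
    (hc : c ∈ on (small ε)) (hcf : c ∈ on {l | l = [] ∨ ∃ v ∈ l, v ∈ far x ρ}) :
    deg a L c = 0 := by
  refine eq_zero_of_on (deg a L) (fun l hl => ?_) (mem_on_inter hc hcf)
  rcases hl.2 with rfl | ⟨v, hv, i, hi⟩
  · rw [deg_apply, bdry_of_mem_nil (dcaps_mem_nil a L (tup_mem_on rfl)), Finsupp.zero_apply]
  · have hconst : ∀ w ∈ l, a i v = a i w := fun w hw => by
      by_contra h
      have hdist := (dist_le_pi_dist v w i).trans (hl.1 v hv w hw)
      rw [Real.dist_eq] at hdist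
      linarith [ha i v w h]
    exact deg_of_const a L (tup_mem_on ⟨i, hL i, fun w hw w' hw' => by
      rw [← hconst w hw, ← hconst w' hw']⟩)

theorem deg_push_sub_eq {a : ι → (ι → ℝ) → ZMod 2} (ha : Cuts a 0) (hL : ∀ i, i ∈ L)
    (hε : ε + dist x y < ρ) (hc : c ∈ on (small ε))
    (hb : bdry c ∈ on (within (far x ρ ∩ far y ρ))) :
    deg a L (push (fun v => v - x) c) = deg a L (push (fun v => v - y) c) := by
  set Φ := prism (fun v => v - x) (fun v => v - y)
  have hfar : Φ (bdry c) ∈ on (within (far 0 ρ)) :=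
    prism_mem_within _ _ (fun v hv => sub_mem_far.2 hv.1) (fun v hv => sub_mem_far.2 hv.2) hb
  have hsmall : Φ (bdry c) ∈ on (small (ε + dist x y)) := by
    have h0 := dist_nonneg (x := x) (y := y)
    refine prism_mem_small _ _ (A := Set.univ) ?_ ?_ ?_ (mem_within_univ _)
      (bdry_mem (isHereditary_small _) hc)
    · exact fun v _ w _ h => by rw [dist_sub_right]; linarith
    · exact fun v _ w _ h => by rw [dist_sub_right]; linarith
    · exact fun v _ w _ h => (dist_sub_sub_le v x w y).trans (by linarith)
  have h := deg_bdry a L (Φ c)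
  rw [bdry_prism, map_add, map_add,
    deg_of_far ha hL hε hsmall (on_mono (within_subset_exists _) hfar), add_zero] at h
  rwa [add_eq_zero_iff_eq_neg, ZModModule.neg_eq_self] at h

theorem deg_half_congr (hL : ∀ i, i ∈ L) (hε : ε + dist x y < ρ) (hc : c ∈ on (small ε))
    (hb : bdry c ∈ on (within (far x ρ ∩ far y ρ))) : deg (half x) L c = deg (half y) L c := by
  have h := deg_push_sub_eq (cuts_half 0) hL hε hc hb
  have hsub (x : ι → ℝ) : (fun i => half 0 i ∘ fun v => v - x) = half x := by ext; simp [half]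
  rwa [deg_push, deg_push, hsub, hsub] at h

theorem deg_half_flip_congr (hL : ∀ i, i ∈ L) (hε : ε + dist x y < ρ) (hc : c ∈ on (small ε))
    (hb : bdry c ∈ on (within (far x ρ ∩ far y ρ))) :
    deg (fun i v => half v i x) L c = deg (fun i v => half v i y) L c := by
  have h := deg_push_sub_eq (cuts_half_flip 0) hL hε hc hb
  have hsub (x : ι → ℝ) : (fun i => (fun v => half v i 0) ∘ fun v => v - x) =
      fun i v => half v i x := by ext; simp [half]
  rwa [deg_push, deg_push, hsub, hsub] at h

theorem exists_len_filling {ε' : ℝ} {n : ℕ} (hε0 : 0 ≤ ε) (hε : ε < ρ) (hLn : L.Nodup)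
    (hL : ∀ i, i ∈ L) (hε' : ε < ε') (hc : c ∈ on (len _ n)) (hcε : c ∈ on (small ε))
    (hcb : bdry c ∈ on (within (far p ρ))) (hdcaps : bdry (dcaps (half p) L c) = 0) :
    ∃ w ∈ on (len _ (n + 1) ∩ small ε'), c + bdry w ∈ on (within (far p ρ)) := by
  obtain ⟨w, -, hw, hwb⟩ := exists_small_filling p hε0 hε hLn hε' hcε
    (on_mono (fun l _ v _ j hj => absurd (hL j) hj) hcε) hcb hdcaps
  refine ⟨grade (n + 1) w, grade_mem _ hw, ?_⟩
  have h := grade_mem n hwb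
  rw [map_add, grade_of_len hc, ← bdry_grade] at h
  exact on_mono Set.inter_subset_right h

end Far

open Metric Topology

variable {κ : Type*}

/-! ### Sheets -/

/-- The retraction of `κ → ℝ` onto the cube of centre `0` and radius `1`. -/
def clamp (y : κ → ℝ) : κ → ℝ := fun i => max (-1) (min 1 (y i))

theorem continuous_clamp : Continuous (clamp : (κ → ℝ) → κ → ℝ) := by
  unfold clamp
  fun_prop

theorem abs_clamp_le (y : κ → ℝ) (i : κ) : |clamp y i| ≤ 1 :=
  abs_le.2 ⟨le_max_left _ _, max_le (by norm_num) (min_le_left _ _)⟩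

section Clamp

variable [Fintype κ]

theorem clamp_mem_closedBall (y : κ → ℝ) : clamp y ∈ closedBall (0 : κ → ℝ) 1 :=
  mem_closedBall_zero_iff.2 <| (pi_norm_le_iff_of_nonneg zero_le_one).2 fun i => abs_clamp_le y i

theorem clamp_of_mem_closedBall {y : κ → ℝ} (hy : y ∈ closedBall (0 : κ → ℝ) 1) : clamp y = y := by
  ext i
  have h := abs_le.1 ((norm_le_pi_norm y i).trans (mem_closedBall_zero_iff.1 hy))
  rw [clamp, min_eq_right h.2, max_eq_right h.1]

theorem dist_clamp_clamp_le (y y' : κ → ℝ) : dist (clamp y) (clamp y') ≤ dist y y' := by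
  refine (dist_pi_le_iff dist_nonneg).2 fun i => le_trans ?_ (dist_le_pi_dist y y' i)
  rw [Real.dist_eq, Real.dist_eq, clamp, clamp]
  have hmax := abs_max_sub_max_le_max (-1) (min 1 (y i)) (-1) (min 1 (y' i))
  have hmin := abs_min_sub_min_le_max 1 (y i) 1 (y' i)
  rw [sub_self, abs_zero] at hmax hmin
  exact hmax.trans (max_le (abs_nonneg _) (hmin.trans (max_le (abs_nonneg _) le_rfl)))

theorem clamp_mem_far {y u : κ → ℝ} {ρ : ℝ} (hρ : ρ ≤ 1 - ‖u‖) (h : y ∈ far u ρ) :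
    clamp y ∈ far u ρ := by
  obtain ⟨i, hi⟩ := h
  refine ⟨i, ?_⟩
  have hui := abs_le.1 (norm_le_pi_norm u i)
  rw [clamp]
  rcases le_total (y i) 1 with h1 | h1
  · rcases le_total (-1) (y i) with h2 | h2
    · rwa [min_eq_right h1, max_eq_right h2]
    · rw [min_eq_right h1, max_eq_left h2]
      exact le_trans (by linarith) (neg_le_abs _)
  · rw [min_eq_left h1, max_eq_right (by norm_num)]
    exact le_trans (by linarith) (le_abs_self _)

end Clamp

/-- An embedded cube of `ι → ℝ`, given by a parametrization `φ` extended to all of `κ → ℝ` so as to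
be constant along the fibres of `clamp`, together with a continuous left inverse `r` of `φ`. -/
structure Sheet (ι κ : Type*) where
  φ : (κ → ℝ) → ι → ℝ
  r : (ι → ℝ) → κ → ℝ
  continuous_φ : Continuous φ
  continuous_r : Continuous r
  r_φ : ∀ y, r (φ y) = clamp y
  φ_clamp : ∀ y, φ (clamp y) = φ y

theorem eventually_dist_le_of_isCompact {X Y : Type*} [PseudoMetricSpace X] [ProperSpace X]
    [PseudoMetricSpace Y] {D : Set X} (hD : IsCompact D) {f : X → Y} (hf : Continuous f) {ε : ℝ}
    (hε : 0 < ε) : ∀ᶠ η in 𝓝[>] (0 : ℝ), ∀ v ∈ cthickening η D, ∀ w ∈ cthickening η D,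
      dist v w ≤ 2 * η → dist (f v) (f w) ≤ ε := by
  have hunif := (hD.cthickening (r := 1)).uniformContinuousOn_of_continuous hf.continuousOn
  obtain ⟨δ, hδ, h⟩ := Metric.uniformContinuousOn_iff_le.1 hunif ε hε
  filter_upwards [Ioc_mem_nhdsGT (lt_min one_pos (half_pos hδ))] with η hη v hv w hw hvw
  have hη1 := cthickening_mono (hη.2.trans (min_le_left _ _)) D
  exact h v (hη1 hv) w (hη1 hw) (by linarith [hη.2.trans (min_le_right 1 (δ / 2))])

namespace Sheet

variable (S : Sheet ι κ)

/-- The embedded cube. -/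
def carrier : Set (ι → ℝ) := Set.range S.φ

theorem φ_r {d : ι → ℝ} (hd : d ∈ S.carrier) : S.φ (S.r d) = d := by
  obtain ⟨y, rfl⟩ := hd
  rw [S.r_φ, S.φ_clamp]

theorem r_φ_of_mem_closedBall [Fintype κ] {y : κ → ℝ} (hy : y ∈ closedBall (0 : κ → ℝ) 1) :
    S.r (S.φ y) = y := by
  rw [S.r_φ, clamp_of_mem_closedBall hy]

theorem carrier_eq [Fintype κ] : S.carrier = S.φ '' closedBall 0 1 := by
  refine Set.Subset.antisymm ?_ (Set.image_subset_range _ _)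
  rintro _ ⟨y, rfl⟩
  exact ⟨clamp y, clamp_mem_closedBall y, S.φ_clamp y⟩

theorem isCompact_carrier [Finite κ] : IsCompact S.carrier := by
  have := Fintype.ofFinite κ
  rw [carrier_eq]
  exact (isCompact_closedBall _ _).image S.continuous_φ

theorem isClosed_carrier [Finite κ] : IsClosed S.carrier := S.isCompact_carrier.isClosed

theorem exists_dist_φ_le [Fintype κ] [Fintype ι] {ε : ℝ} (hε : 0 < ε) :
    ∃ δ > 0, ∀ y y' : κ → ℝ, dist y y' ≤ δ → dist (S.φ y) (S.φ y') ≤ ε := by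
  have hunif := (isCompact_closedBall (0 : κ → ℝ) 1).uniformContinuousOn_of_continuous
    S.continuous_φ.continuousOn
  obtain ⟨δ, hδ, h⟩ := Metric.uniformContinuousOn_iff_le.1 hunif ε hε
  refine ⟨δ, hδ, fun y y' hy => ?_⟩
  rw [← S.φ_clamp y, ← S.φ_clamp y']
  exact h _ (clamp_mem_closedBall y) _ (clamp_mem_closedBall y')
    ((dist_clamp_clamp_le y y').trans hy)

theorem eventually_r_mem_far [Finite κ] [Fintype ι] (u : κ → ℝ) {ρ : ℝ} (hρ : 0 < ρ) :
    ∀ᶠ η in 𝓝[>] (0 : ℝ), ∀ v ∈ far (S.φ u) ρ ∩ cthickening η S.carrier, S.r v ∈ far u η := by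
  have := Fintype.ofFinite κ
  set C := cthickening 1 S.carrier ∩ far (S.φ u) ρ
  have hC : IsCompact C := S.isCompact_carrier.cthickening.inter_right (isClosed_far _ _)
  have hcont : Continuous fun v => max (infDist v S.carrier) (dist (S.r v) u) :=
    (continuous_infDist_pt _).max (S.continuous_r.dist continuous_const)
  obtain ⟨c, hc, hmin⟩ := hC.exists_forall_le' hcont.continuousOn (a := 0) fun v hv => by
    rw [lt_max_iff, ← S.isClosed_carrier.notMem_iff_infDist_pos ⟨_, u, rfl⟩, dist_pos]
    by_contra! h
    have hvu := (mem_far_iff hρ).1 hv.2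
    rw [← h.2, S.φ_r h.1, dist_self] at hvu
    linarith
  filter_upwards [Ioo_mem_nhdsGT (lt_min one_pos hc)] with η hη v hv
  have hv1 := cthickening_mono (hη.2.le.trans (min_le_left _ _)) _ hv.2
  have hvη : infDist v S.carrier ≤ η := by
    obtain ⟨d, hd, hvd⟩ := Set.mem_iUnion₂.1
      (S.isCompact_carrier.cthickening_eq_biUnion_closedBall hη.1.le ▸ hv.2)
    exact (infDist_le_dist_of_mem hd).trans hvd
  refine (mem_far_iff hη.1).2 ?_
  have hηc := hη.2.trans_le (min_le_right _ _)
  exact hηc.le.trans <|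
    (le_max_iff.1 (hmin v ⟨hv1, hv.1⟩)).resolve_left (hvη.trans_lt hηc).not_ge

theorem exists_mem_far_of_r_mem_far [Fintype κ] [Finite ι] {u : κ → ℝ} (hu : ‖u‖ ≤ 1) {σ : ℝ}
    (hσ : 0 < σ) :
    ∃ ρ > 0, ∀ v, S.r v ∈ far u σ → v ∈ far (S.φ u) ρ := by
  have := Fintype.ofFinite ι
  obtain ⟨ρ, hρ, h⟩ := Metric.continuous_iff.1 S.continuous_r (S.φ u) σ hσ
  rw [S.r_φ_of_mem_closedBall (mem_closedBall_zero_iff.2 hu)] at h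
  exact ⟨ρ, hρ, fun v hv => (mem_far_iff hρ).2 <| not_lt.1 fun hv' =>
    ((mem_far_iff hσ).1 hv).not_gt (h v hv')⟩

theorem eventually_prism_retract_mem [Finite κ] [Fintype ι] {s : ℝ} (hs : 0 < s) :
    ∀ᶠ η in 𝓝[>] (0 : ℝ), ∀ z ∈ on (small η ∩ within (cthickening η S.carrier)),
      prism (fun v => v) (S.φ ∘ S.r) z ∈ on (small s ∩ within (cthickening η S.carrier)) := by
  filter_upwards [Ioc_mem_nhdsGT (half_pos hs), eventually_dist_le_of_isCompact
    S.isCompact_carrier (S.continuous_φ.comp S.continuous_r) (half_pos hs)] with η hη hφr z hz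
  have hzs := on_mono Set.inter_subset_left hz
  have hzD := on_mono Set.inter_subset_right hz
  have hDη := self_subset_cthickening (δ := η) S.carrier
  refine mem_on_inter (prism_mem_small _ _ (fun v _ w _ h => by linarith [hη.2]) ?_ ?_ hzD hzs)
    (prism_mem_within _ _ (fun v hv => hv) (fun v _ => hDη ⟨_, rfl⟩) hzD)
  · exact fun v hv w hw h => (hφr v hv w hw (by linarith [hη.1])).trans (by linarith)
  · intro v hv w hw h
    obtain ⟨d, hd, hvd⟩ := Set.mem_iUnion₂.1
      (S.isCompact_carrier.cthickening_eq_biUnion_closedBall hη.1.le ▸ hv)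
    rw [mem_closedBall] at hvd
    have hdw := hφr d (hDη hd) w hw (by linarith [dist_triangle_left d w v])
    rw [Function.comp_apply, S.φ_r hd] at hdw
    linarith [dist_triangle v d ((S.φ ∘ S.r) w), hη.2]

theorem exists_filling_near [Fintype κ] [Fintype ι] {K : List κ} (hKn : K.Nodup)
    (hK : ∀ i, i ∈ K) {u : κ → ℝ} (hu : ‖u‖ < 1) {R : ℝ} (hR : 0 < R) :
    ∃ ρ > 0, ρ ≤ R ∧ ∀ s > 0, ∀ᶠ η in 𝓝[>] (0 : ℝ), ∀ z ∈ on (len _ (K.length + 1)),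
      z ∈ on (small η ∩ within (cthickening η S.carrier)) → bdry z ∈ on (within (far (S.φ u) R)) →
      deg (half u) K (push S.r z) = 0 →
      ∃ d ∈ on (small s ∩ within (cthickening η S.carrier)),
        z + bdry d ∈ on (within (far (S.φ u) ρ)) := by
  obtain ⟨σ, hfar, hσ, hσu⟩ := ((S.eventually_r_mem_far u hR).and
    (Ioc_mem_nhdsGT (sub_pos.2 hu))).exists
  obtain ⟨ρ', hρ', hr⟩ := S.exists_mem_far_of_r_mem_far hu.le hσ
  have hφ (y) (hy : y ∈ far u σ) : S.φ y ∈ far (S.φ u) (min R ρ') :=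
    far_mono (min_le_right _ _) (hr _ (by rw [S.r_φ]; exact clamp_mem_far hσu hy))
  refine ⟨min R ρ', lt_min hR hρ', min_le_left _ _, fun s hs => ?_⟩
  obtain ⟨δ, hδ, hφs⟩ := S.exists_dist_φ_le hs
  have hε : 0 < min δ σ / 2 := half_pos (lt_min hδ hσ)
  filter_upwards [self_mem_nhdsWithin, Ioc_mem_nhdsGT hσ, S.eventually_prism_retract_mem hs,
    eventually_dist_le_of_isCompact S.isCompact_carrier S.continuous_r hε]
    with η hη hησ hprism hrε z hzn hz hzb hdeg
  have hzη := on_mono Set.inter_subset_left hz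
  have hzD := on_mono Set.inter_subset_right hz
  have hrfar (v) (hv : v ∈ far (S.φ u) R ∩ cthickening η S.carrier) : S.r v ∈ far u σ :=
    hfar v ⟨hv.1, cthickening_mono hησ.2 _ hv.2⟩
  have hbz := mem_within_inter hzb (bdry_mem (isHereditary_within _) hzD)
  obtain ⟨w, hw, hwb⟩ := exists_len_filling (p := u) (ρ := σ) (ε' := δ) hε.le
    (by linarith [min_le_right δ σ]) hKn hK (by linarith [min_le_left δ σ]) (push_mem_len S.r hzn)
    (push_mem_small _ (fun v hv w hw h => hrε v hv w hw (by linarith [hη.out])) hzD hzη)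
    (by rw [bdry_push]; exact push_mem_within _ hrfar hbz)
    (bdry_dcaps_eq_zero_of_deg _ _ (push_mem_len S.r hzn) hdeg)
  have hwδ := on_mono Set.inter_subset_right hw
  refine ⟨push S.φ w + prism (fun v => v) (S.φ ∘ S.r) z, add_mem (mem_on_inter
    (push_mem_small _ (fun y _ y' _ => hφs y y') (mem_within_univ _) hwδ)
    (push_mem_within _ (fun y _ => self_subset_cthickening S.carrier ⟨y, rfl⟩)
      (mem_within_univ _)))
    (hprism z hz), ?_⟩
  rw [add_bdry_push_add_prism]
  refine add_mem (push_mem_within _ hφ hwb) (prism_mem_within _ _ ?_ ?_ hbz)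
  · exact fun v hv => far_mono (min_le_left _ _) hv.1
  · exact fun v hv => hφ _ (hrfar v hv)

end Sheet

/-! ### Functions that are locally constant off a sheet -/

/-- `f` is locally constant on `V`, except possibly at the points of `D`. -/
def IsLocConstOff [TopologicalSpace Y] (f : Y → ZMod 2) (V D : Set Y) : Prop :=
  ∀ x ∈ V \ D, ∀ᶠ y in 𝓝 x, f y = f x

/-- `f` takes both values arbitrarily close to `q`, off `D`. -/
def JumpsAt [TopologicalSpace Y] (f : Y → ZMod 2) (D : Set Y) (q : Y) : Prop :=
  ∀ U ∈ 𝓝 q, ∃ x ∈ U \ D, ∃ y ∈ U \ D, f x ≠ f y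

theorem IsLocConstOff.add [TopologicalSpace Y] {f g : Y → ZMod 2} {V D : Set Y}
    (hf : IsLocConstOff f V D) (hg : IsLocConstOff g V D) : IsLocConstOff (f + g) V D := by
  intro x hx
  filter_upwards [hf x hx, hg x hx] with y hfy hgy
  rw [Pi.add_apply, Pi.add_apply, hfy, hgy]

theorem IsLocConstOff.eq_of_isPreconnected [TopologicalSpace Y] {f : Y → ZMod 2} {V D C : Set Y}
    (hf : IsLocConstOff f V D) (hC : IsPreconnected C) (hCV : C ⊆ V \ D) {x y : Y} (hx : x ∈ C)
    (hy : y ∈ C) : f x = f y :=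
  hC.constant (fun z hz => (continuousAt_const.congr
    ((hf z (hCV hz)).mono fun _ h => h.symm)).continuousWithinAt) hx hy

theorem IsLocConstOff.dcap_mem [Fintype ι] {f : (ι → ℝ) → ZMod 2} {V D C : Set (ι → ℝ)}
    (hf : IsLocConstOff f V D) (hC : Convex ℝ C) (hCV : C ⊆ V) {η : ℝ} {c : TupleChain (ι → ℝ)}
    (hc : c ∈ on (small η)) (hcC : c ∈ on (within C)) :
    dcap f c ∈ on (within (cthickening η D)) := by
  refine dcap_mem_straddle f (s := small η ∩ within C) (fun v hv => by simp at hv) ?_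
    (isHereditary_within _) (mem_on_inter hc hcC)
  rintro l ⟨hl, hlC⟩ ⟨v, hv, w, hw, hne⟩ u hu
  obtain ⟨d, hd, hdD⟩ : ∃ d ∈ segment ℝ v w, d ∈ D := by
    by_contra! h
    exact hne <| hf.eq_of_isPreconnected (convex_segment v w).isPreconnected
      (fun x hx => ⟨hCV (hC.segment_subset (hlC v hv) (hlC w hw) hx), h x hx⟩)
      (left_mem_segment ℝ v w) (right_mem_segment ℝ v w)
  exact mem_cthickening_of_dist_le u d η D hdD <| mem_closedBall'.1 <|
    (convex_closedBall u η).segment_subset (hl v hv u hu) (hl w hw u hu) hd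

theorem add_smul_cap_mem (f : X → ZMod 2) (e : ZMod 2) {n : ℕ} {c : TupleChain X}
    (hc : c ∈ on (len X (n + 1))) : cap f c + e • c ∈ on {l | ∃ v ∈ l, f v ≠ e} := by
  refine map_mem_of_on (cap f + e • LinearMap.id) (fun l hl => ?_) hc
  obtain ⟨v, l, rfl⟩ := List.exists_cons_of_length_eq_add_one hl
  rw [LinearMap.add_apply, cap_tup_cons, LinearMap.smul_apply, LinearMap.id_apply, ← add_smul]
  by_cases h : f v = e
  · rw [h, ZModModule.add_self, zero_smul]
    exact zero_mem _
  · exact Submodule.smul_mem _ _ (tup_mem_on ⟨v, by simp, h⟩)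

theorem IsFundamental.deg_cap [Fintype ι] {L : List ι} (hL : ∀ i, i ∈ L) {q x : ι → ℝ} {R η s : ℝ}
    {G : TupleChain (ι → ℝ)} (hG : IsFundamental L q R η G) (hx : x ∈ ball q R) (hη : η < s)
    {f : (ι → ℝ) → ZMod 2} (hf : ∀ v ∉ far x s, f v = f x) :
    deg (half x) L (cap f G) = f x := by
  have hdeg : deg (half x) L (cap f G + f x • G) = 0 := by
    refine deg_of_far (cuts_half x) hL hη
      (add_mem (cap_mem f hG.mem_small) (Submodule.smul_mem _ _ hG.mem_small))
      (on_mono ?_ (add_smul_cap_mem f (f x) hG.mem_len))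
    rintro l ⟨v, hv, hne⟩
    exact Or.inr ⟨v, hv, by_contra fun h => hne (hf v h)⟩
  have hxR (i) (_ : i ∈ L) : |x i - q i| < R :=
    (dist_le_pi_dist x q i).trans_lt (mem_ball.1 hx)
  rwa [map_add, map_smul, hG.deg_eq x hxR, smul_eq_mul, mul_one, add_eq_zero_iff_eq_neg,
    ZModModule.neg_eq_self] at hdeg

theorem IsFundamental.deg_cap_add [Fintype ι] {L : List ι} (hL : ∀ i, i ∈ L) {q x : ι → ℝ}
    {R η s : ℝ} {G d : TupleChain (ι → ℝ)} (hG : IsFundamental L q R η G) (hx : x ∈ ball q R)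
    (hη : 0 ≤ η) (hs : 0 < s) (hηs : η ≤ s / 2) {f : (ι → ℝ) → ZMod 2} {D : Set (ι → ℝ)}
    (hf : ∀ v ∉ far x s, v ∉ D ∧ f v = f x)
    (hd : d ∈ on (small (s / 4) ∩ within (cthickening η D))) :
    deg (half x) L (cap f G + d) = f x := by
  have hD : D ⊆ far x s := fun v hv => by_contra fun h => (hf v h).1 hv
  have hfar : cthickening η D ⊆ far x (s / 2) :=
    (cthickening_subset_of_subset η hD).trans <| (cthickening_far_subset hη).trans <|
      far_mono (by linarith)
  rw [map_add, hG.deg_cap hL hx (by linarith) fun v hv => (hf v hv).2, add_eq_left]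
  exact deg_of_far (cuts_half x) hL (by linarith) (on_mono Set.inter_subset_left hd)
    (on_mono (Set.inter_subset_right.trans <|
      (within_mono hfar).trans (within_subset_exists _)) hd)

namespace Sheet

variable (S : Sheet ι κ)

theorem eventually_far_eq [Finite κ] [Finite ι] {V : Set (ι → ℝ)} {f : (ι → ℝ) → ZMod 2}
    (hf : IsLocConstOff f V S.carrier) {x : ι → ℝ} (hx : x ∈ V \ S.carrier) :
    ∀ᶠ s in 𝓝[>] (0 : ℝ), ∀ v ∉ far x s, v ∉ S.carrier ∧ f v = f x := by
  have := Fintype.ofFinite ι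
  obtain ⟨s₀, hs₀, h⟩ := Metric.eventually_nhds_iff.1
    ((S.isClosed_carrier.isOpen_compl.eventually_mem hx.2).and (hf x hx))
  filter_upwards [Ioc_mem_nhdsGT hs₀] with s hs v hv
  exact h <| (lt_of_not_ge fun hvs => hv ((mem_far_iff hs.1).2 hvs)).trans_le hs.2

/-- The chain `cap f G` has degree `f x` at `x`, but its boundary has a part `dcap f G` near the
sheet. When that part has degree zero within the sheet, it bounds near the sheet, away from the
centre; correcting `cap f G` accordingly gives a chain whose degree is the same at all points near
the centre. -/
theorem exists_ball_eq_of_deg [Fintype κ] [Fintype ι] {L : List ι} (hL : ∀ i, i ∈ L) {K : List κ}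
    (hKn : K.Nodup) (hK : ∀ i, i ∈ K) (hLK : L.length = K.length + 1) {V : Set (ι → ℝ)}
    {u : κ → ℝ} (hu : ‖u‖ < 1) {R : ℝ} (hR : 0 < R) (hV : closedBall (S.φ u) R ⊆ V) :
    ∃ ρ > 0, ∀ f, IsLocConstOff f V S.carrier → ∀ x ∈ ball (S.φ u) ρ \ S.carrier,
      ∀ y ∈ ball (S.φ u) ρ \ S.carrier, ∀ᶠ η in 𝓝[>] (0 : ℝ), ∀ G, IsFundamental L (S.φ u) R η G →
        deg (half u) K (push S.r (dcap f G)) = 0 → f x = f y := by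
  obtain ⟨ρ, hρ, hρR, hfill⟩ := S.exists_filling_near hKn hK hu hR
  have hball : ball (S.φ u) (ρ / 8) ⊆ ball (S.φ u) R := ball_subset_ball (by linarith)
  have hVD {x} (hx : x ∈ ball (S.φ u) (ρ / 8) \ S.carrier) : x ∈ V \ S.carrier :=
    ⟨hV (ball_subset_closedBall (hball hx.1)), hx.2⟩
  refine ⟨ρ / 8, by positivity, fun f hf x hx y hy => ?_⟩
  obtain ⟨s, ⟨hsx, hsy⟩, hs, hsρ⟩ := (((S.eventually_far_eq hf (hVD hx)).and
    (S.eventually_far_eq hf (hVD hy))).and (Ioc_mem_nhdsGT hρ)).exists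
  filter_upwards [hfill (s / 4) (by positivity),
    Ioc_mem_nhdsGT (show (0 : ℝ) < s / 4 by positivity)] with η hη hηs G hG hdeg
  obtain ⟨d, hd, hdb⟩ := hη (dcap f G) (hLK ▸ dcap_mem_len f hG.mem_len)
    (mem_on_inter (dcap_mem f (isHereditary_small _) hG.mem_small)
      (hf.dcap_mem (convex_closedBall _ _) hV hG.mem_small hG.mem_within))
    (by rw [bdry_dcap]; exact dcap_mem f (isHereditary_within _) hG.bdry_mem) hdeg
  have hcs : cap f G + d ∈ on (small (s / 4)) :=
    add_mem (on_mono (small_mono hηs.2) (cap_mem f hG.mem_small)) (on_mono Set.inter_subset_left hd)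
  have hcb : bdry (cap f G + d) ∈ on (within (far (S.φ u) ρ)) := by
    rw [map_add, bdry_cap, add_comm (dcap f G), add_assoc]
    exact add_mem (cap_mem f (on_mono (within_mono (far_mono hρR)) hG.bdry_mem)) hdb
  have hval {x} (hx : x ∈ ball (S.φ u) (ρ / 8)) :=
    hG.deg_cap_add hL (hball hx) hηs.1.le hs (by linarith [hηs.2]) (d := d) (f := f)
      (D := S.carrier)
  rw [← hval hx.1 hsx hd, ← hval hy.1 hsy hd]
  have hxu := mem_ball'.1 hx.1
  have hyu := mem_ball'.1 hy.1
  refine deg_half_congr hL (ρ := ρ - ρ / 8) (by linarith [dist_triangle_left x y (S.φ u)]) hcs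
    (on_mono (within_mono fun v hv => ?_) hcb)
  exact ⟨mem_far_of_center hv hxu.le, mem_far_of_center hv hyu.le⟩

theorem exists_add_eq [Fintype κ] [Fintype ι] (hcard : Fintype.card ι = Fintype.card κ + 1)
    {V : Set (ι → ℝ)} {u : κ → ℝ} (hu : ‖u‖ < 1) (hV : V ∈ 𝓝 (S.φ u)) {f g : (ι → ℝ) → ZMod 2}
    (hf : IsLocConstOff f V S.carrier) (hg : IsLocConstOff g V S.carrier)
    (hfj : JumpsAt f S.carrier (S.φ u)) (hgj : JumpsAt g S.carrier (S.φ u)) :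
    ∃ U ∈ 𝓝 (S.φ u), ∀ x ∈ U \ S.carrier, ∀ y ∈ U \ S.carrier, f x + g x = f y + g y := by
  obtain ⟨R, hR, hRV⟩ := Metric.nhds_basis_closedBall.mem_iff.1 hV
  obtain ⟨ρ, hρ, h⟩ := S.exists_ball_eq_of_deg (L := Finset.univ.toList) (by simp)
    (K := Finset.univ.toList) (Finset.nodup_toList _) (by simp) (by simpa using hcard) hu hR hRV
  obtain ⟨x₁, hx₁, y₁, hy₁, hne₁⟩ := hfj _ (ball_mem_nhds _ hρ)
  obtain ⟨x₂, hx₂, y₂, hy₂, hne₂⟩ := hgj _ (ball_mem_nhds _ hρ)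
  refine ⟨_, ball_mem_nhds _ hρ, fun x hx y hy => ?_⟩
  obtain ⟨η, ⟨⟨h₁, h₂⟩, h₃⟩, hη⟩ := (((h f hf x₁ hx₁ y₁ hy₁).and (h g hg x₂ hx₂ y₂ hy₂)).and
    (h (f + g) (hf.add hg) x hx y hy)).and self_mem_nhdsWithin |>.exists
  obtain ⟨G, hG⟩ := exists_isFundamental (Finset.nodup_toList Finset.univ) (S.φ u) hR hη
  refine h₃ G hG ?_
  rw [dcap_add_apply, map_add, map_add, Fin.eq_one_of_ne_zero _ fun h0 => hne₁ (h₁ G hG h0),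
    Fin.eq_one_of_ne_zero _ fun h0 => hne₂ (h₂ G hG h0)]
  exact ZModModule.add_self _

end Sheet

/-! ### The two sides of a sheet -/

/-- The local degree at `x` of a chain, computed with the half-spaces `{v | v i ≤ x i}` opposite to
those of `half x`: this is the variant that occurs in `exists_localization`. -/
def localDeg (L : List ι) (w : TupleChain (ι → ℝ)) (x : ι → ℝ) : ZMod 2 :=
  deg (fun i v => half v i x) L w

theorem cap_add_smul_mem_cthickening [PseudoMetricSpace X] {n : ℕ} {ε : ℝ} {c : TupleChain X}
    (hc : c ∈ on (len _ (n + 1) ∩ small ε)) {f : X → ZMod 2} {e : ZMod 2} {D : Set X}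
    (hf : ∀ l ∈ c.support, ∀ v ∈ l, v ∉ D → f v = e) :
    cap f c + e • c ∈ on (within (cthickening ε D)) := by
  have hc' : c ∈ on (small ε ∩ {l | ∀ v ∈ l, v ∉ D → f v = e}) :=
    mem_on_inter (on_mono Set.inter_subset_right hc) hf
  refine on_mono ?_ <| mem_on_inter (add_mem (cap_mem f hc') (Submodule.smul_mem _ e hc'))
    (add_smul_cap_mem f e (on_mono Set.inter_subset_left hc))
  rintro l ⟨⟨hl, hle⟩, v, hv, hne⟩ w hw
  exact mem_cthickening_of_dist_le w v ε D (by_contra fun h => hne (hle v hv h)) (hl w hw v hv)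

theorem IsFundamental.add_cap_mem [Fintype ι] {L : List ι} {q : ι → ℝ} {R η ε : ℝ}
    {G w : TupleChain (ι → ℝ)} (hG : IsFundamental L q R η G) (hR : 0 < R) (hw : w ∈ on (small ε)) :
    w + cap (fun y => deg (half y) L G) w ∈ on (within (far q (R - ε))) := by
  refine on_mono ?_ (add_cap_mem_eq _ hw)
  rintro l ⟨hl, rfl | ⟨v, hv, hv0⟩⟩ y hy
  · simp at hy
  · refine mem_far_of_dist ((mem_far_iff hR).2 <| not_lt.1 fun h => ?_) (hl v hv y hy)
    exact zero_ne_one <| hv0.symm.trans <|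
      hG.deg_eq v fun i _ => (dist_le_pi_dist v q i).trans_lt h

theorem eventually_forall_mem_support {I : Type*} {F : Filter I} {f : I → X → Y} {g : X → Y}
    (h : ∀ x, ∀ᶠ n in F, f n x = g x) (c : TupleChain X) :
    ∀ᶠ n in F, ∀ l ∈ c.support, ∀ v ∈ l, f n v = g v := by
  refine (Filter.eventually_all_finset _).2 fun l _ => ?_
  exact (Filter.eventually_all_finite l.finite_toSet).2 fun v _ => h v

namespace Sheet

variable (S : Sheet ι κ)

/-- `w` is a chain of mesh `ε` whose boundary, inside the cube of centre `p` and radius `R`, is the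
image under `S.φ` of the fundamental chain `G`. -/
structure IsFilling [Fintype ι] [Fintype κ] (L : List ι) (K : List κ) (p : ι → ℝ) (R ε : ℝ)
    (w : TupleChain (ι → ℝ)) (G : TupleChain (κ → ℝ)) : Prop where
  mem : w ∈ on (len _ (L.length + 1) ∩ small ε)
  isFundamental : ∃ δ, IsFundamental K 0 1 δ G
  push_mem : push S.φ G ∈ on (len _ L.length ∩ small ε)
  bdry_add_mem : bdry w + push S.φ G ∈ on (within (far p R))

theorem push_φ_mem_within (c : TupleChain (κ → ℝ)) : push S.φ c ∈ on (within S.carrier) :=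
  push_mem_within _ (fun y _ => Set.mem_range_self y) (mem_within_univ c)

theorem deg_push_r_push_φ [Fintype κ] {K : List κ} {u : κ → ℝ} (hu : ‖u‖ < 1) {δ : ℝ}
    {G : TupleChain (κ → ℝ)} (hG : IsFundamental K 0 1 δ G) :
    deg (half u) K (push S.r (push S.φ G)) = 1 := by
  rw [push_push, push_congr (g := S.r ∘ S.φ) (h := fun y => y)
    (fun y hy => S.r_φ_of_mem_closedBall hy) hG.mem_within, push_id]
  exact hG.deg_eq u fun i _ => by simpa using (norm_le_pi_norm u i).trans_lt hu

section IsFilling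

variable [Fintype ι] [Fintype κ] {L : List ι} {K : List κ} {p : ι → ℝ} {R ε : ℝ}

theorem exists_isFilling (hLn : L.Nodup) (hL : ∀ i, i ∈ L) (hKn : K.Nodup)
    (hLK : L.length = K.length + 1) (hR : 0 < R) (hS : ∀ y ∈ far 0 1, S.φ y ∈ far p R)
    (hε : 0 < ε) : ∃ w G, S.IsFilling L K p R ε w G := by
  have hε' : 0 < min ε R / 2 := half_pos (lt_min hε hR)
  have hεε : min ε R / 2 < ε := by linarith [min_le_left ε R]
  obtain ⟨δ, hδ, hφ⟩ := S.exists_dist_φ_le hε'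
  obtain ⟨G, hG⟩ := exists_isFundamental hKn 0 one_pos hδ
  have hP : push S.φ G ∈ on (small (min ε R / 2)) :=
    push_mem_small _ (fun x _ y _ h => hφ x y h) (mem_within_univ _) hG.mem_small
  have hPl : push S.φ G ∈ on (len _ L.length) := hLK ▸ push_mem_len _ hG.mem_len
  obtain ⟨w, hw, hwb⟩ := exists_len_filling (p := p) (ρ := R) hε'.le
    (by linarith [min_le_right ε R]) hLn hL hεε hPl hP
    (by rw [bdry_push]; exact push_mem_within _ hS hG.bdry_mem)
    (bdry_dcaps_of_len _ _ hPl)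
  exact ⟨w, G, hw, ⟨δ, hG⟩, mem_on_inter hPl (on_mono (small_mono hεε.le) hP),
    add_comm (bdry w) _ ▸ hwb⟩

variable {S} {w : TupleChain (ι → ℝ)} {G : TupleChain (κ → ℝ)}

theorem IsFilling.mono {ε' : ℝ} (hw : S.IsFilling L K p R ε w G) (h : ε ≤ ε') :
    S.IsFilling L K p R ε' w G where
  mem := on_mono (Set.inter_subset_inter_right _ (small_mono h)) hw.mem
  isFundamental := hw.isFundamental
  push_mem := on_mono (Set.inter_subset_inter_right _ (small_mono h)) hw.push_mem
  bdry_add_mem := hw.bdry_add_mem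

theorem IsFilling.bdry_mem (hw : S.IsFilling L K p R ε w G) :
    bdry w ∈ on (within (S.carrier ∪ far p R)) := by
  have hsum : bdry w = push S.φ G + (bdry w + push S.φ G) := by
    rw [add_comm (bdry w), ← add_assoc, ZModModule.add_self, zero_add]
  rw [hsum]
  exact add_mem (on_mono (within_mono Set.subset_union_left) (S.push_φ_mem_within G))
    (on_mono (within_mono Set.subset_union_right) hw.bdry_add_mem)

variable (S)

theorem exists_localDeg_eq (hL : ∀ i, i ∈ L) (K : List κ) {x : ι → ℝ} (hR : 0 < R)
    (hx : x ∈ ball p R \ S.carrier) :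
    ∃ s > 0, ∀ w G, S.IsFilling L K p R s w G →
      ∀ y ∈ ball x s, localDeg L w y = localDeg L w x := by
  obtain ⟨t, ht, htx⟩ := Metric.isOpen_iff.1 (isOpen_ball.sdiff S.isClosed_carrier) x hx
  have hfar : S.carrier ∪ far p R ⊆ far x t := by
    refine fun v hv => (mem_far_iff ht).2 (not_lt.1 fun h => ?_)
    obtain ⟨hvR, hvD⟩ := htx h
    exact hv.elim hvD fun hv => (mem_ball.1 hvR).not_ge ((mem_far_iff hR).1 hv)
  refine ⟨t / 8, by positivity, fun w G hw y hy => ?_⟩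
  refine deg_half_flip_congr hL (ρ := t - t / 8) (by linarith [mem_ball.1 hy])
    (on_mono Set.inter_subset_right hw.mem) (on_mono (within_mono fun v hv => ?_) hw.bdry_mem)
  exact ⟨mem_far_of_center (hfar hv) (mem_ball'.1 hy).le, far_mono (by linarith) (hfar hv)⟩

theorem eventually_push_φ_add_bdry_notMem (hK : ∀ i, i ∈ K) {u : κ → ℝ} (hu : ‖u‖ < 1) {ρ : ℝ}
    (hρ : 0 < ρ) : ∀ᶠ η in 𝓝[>] (0 : ℝ), ∀ δ G, IsFundamental K 0 1 δ G →
      ∀ c ∈ on (within (cthickening η S.carrier)),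
        push S.φ G + bdry c ∉ on (small η ∩ within (far (S.φ u) ρ)) := by
  obtain ⟨σ, hσfar, hσ : 0 < σ⟩ :=
    ((S.eventually_r_mem_far u hρ).and self_mem_nhdsWithin).exists
  filter_upwards [Ioc_mem_nhdsGT hσ, eventually_dist_le_of_isCompact S.isCompact_carrier
    S.continuous_r (half_pos hσ)] with η hη hr δ G hG c hc hY
  have hYD : push S.φ G + bdry c ∈ on (within (cthickening η S.carrier)) :=
    add_mem (on_mono (within_mono (self_subset_cthickening _)) (S.push_φ_mem_within G))
      (bdry_mem (isHereditary_within _) hc)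
  have hYfar := mem_within_inter (on_mono Set.inter_subset_right hY) hYD
  have hdeg : deg (half u) K (push S.r (push S.φ G + bdry c)) = 0 := by
    refine deg_of_far (cuts_half u) hK (half_lt_self hσ) (push_mem_small _
        (fun v hv w hw => hr v hv w hw) hYD
        (on_mono (Set.inter_subset_left.trans (small_mono (by linarith [hη.1]))) hY))
      (on_mono (within_subset_exists _) (push_mem_within _ (fun v hv => ?_) hYfar))
    exact hσfar v ⟨hv.1, cthickening_mono hη.2 _ hv.2⟩
  rw [map_add, map_add, S.deg_push_r_push_φ hu hG, ← bdry_push, deg_bdry, add_zero] at hdeg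
  exact one_ne_zero hdeg

theorem IsFilling.exists_push_φ_add_bdry_cap_mem (hw : S.IsFilling L K p R ε w G)
    (hL : ∀ i, i ∈ L) (hε : 0 ≤ ε) {q : ι → ℝ} {ρ : ℝ} (hρ : 0 < ρ) (hρR : dist p q ≤ R - ρ)
    {H : TupleChain (ι → ℝ)} (hH : IsFundamental L q ρ ε H) :
    ∃ c ∈ on (small (2 * ε) ∩ within (cthickening (2 * ε) S.carrier)),
      push S.φ G + bdry (cap (localDeg L w) H + c) ∈ on (within (far q (ρ - 2 * ε))) := by
  have hpq : far p R ⊆ far q ρ := fun v hv => far_mono (by linarith) (mem_far_of_center hv hρR)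
  have hwε := on_mono Set.inter_subset_right hw.mem
  have hPl := on_mono Set.inter_subset_left hw.push_mem
  have hPε := on_mono Set.inter_subset_right hw.push_mem
  set Q := bdry w + push S.φ G with hQ
  have hQε : Q ∈ on (len _ L.length ∩ (small ε ∩ within (far p R))) :=
    mem_on_inter (add_mem (bdry_mem_len (on_mono Set.inter_subset_left hw.mem)) hPl)
      (mem_on_inter (add_mem (TupleChain.bdry_mem (isHereditary_small _) hwε) hPε) hw.bdry_add_mem)
  have hwPQ : bdry w = push S.φ G + Q := by
    rw [hQ, add_comm (bdry w), ← add_assoc, ZModModule.add_self, zero_add]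
  obtain ⟨N, hN, N', hN', hNN⟩ := exists_localization hL hε hε hw.mem
    (mem_on_inter hH.mem_len hH.mem_small)
    (mem_on_inter hPl (mem_on_inter hPε (S.push_φ_mem_within G))) hQε hwPQ hH.bdry_mem
  rw [← two_mul] at hN hN'
  have hsum : push S.φ G + bdry (cap (localDeg L w) H + N) =
      Q + bdry (w + cap (fun y => deg (half y) L H) w) + bdry N' := by
    change bdry (cap (localDeg L w) H + _ + N + N') = 0 at hNN
    simp only [map_add, hwPQ] at hNN ⊢
    linear_combination (norm := (match_scalars <;> reduce_mod_char)) (1 : ZMod 2) • hNN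
  refine ⟨N, hN, hsum ▸ add_mem (add_mem ?_ ?_) ?_⟩
  · exact on_mono (within_mono (hpq.trans (far_mono (by linarith)))) hw.bdry_add_mem
  · exact TupleChain.bdry_mem (isHereditary_within _) (on_mono (within_mono (far_mono
      (by linarith))) (hH.add_cap_mem hρ hwε))
  · refine TupleChain.bdry_mem (isHereditary_within _) (on_mono (within_mono ?_) hN')
    exact Set.union_subset ((cthickening_subset_of_subset _ hpq).trans
      (cthickening_far_subset (by linarith))) (cthickening_far_subset (by linarith))

theorem IsFilling.exists_push_φ_add_bdry_mem (hw : S.IsFilling L K p R ε w G) (hL : ∀ i, i ∈ L)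
    (hε : 0 ≤ ε) {q : ι → ℝ} {ρ : ℝ} (hρ : 0 < ρ) (hρR : dist p q ≤ R - ρ)
    {H : TupleChain (ι → ℝ)} (hH : IsFundamental L q ρ ε H) {e : ZMod 2}
    (hHe : ∀ l ∈ H.support, ∀ v ∈ l, v ∉ S.carrier → localDeg L w v = e) :
    ∃ c ∈ on (within (cthickening (2 * ε) S.carrier)),
      push S.φ G + bdry c ∈ on (small (2 * ε) ∩ within (far q (ρ - 2 * ε))) := by
  obtain ⟨N, hN, hNq⟩ := hw.exists_push_φ_add_bdry_cap_mem S hL hε hρ hρR hH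
  have hHf : cap (localDeg L w) H + e • H ∈ on (small (2 * ε)) :=
    on_mono (small_mono (by linarith))
      (add_mem (cap_mem _ hH.mem_small) (Submodule.smul_mem _ _ hH.mem_small))
  have hHD : cap (localDeg L w) H + e • H ∈ on (within (cthickening (2 * ε) S.carrier)) :=
    on_mono (within_mono (cthickening_mono (by linarith) _))
      (cap_add_smul_mem_cthickening (mem_on_inter hH.mem_len hH.mem_small) hHe)
  refine ⟨cap (localDeg L w) H + e • H + N, add_mem hHD (on_mono Set.inter_subset_right hN),
    mem_on_inter (add_mem (on_mono (Set.inter_subset_right.trans (small_mono (by linarith)))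
      hw.push_mem) (TupleChain.bdry_mem (isHereditary_small _)
      (add_mem hHf (on_mono Set.inter_subset_left hN)))) ?_⟩
  rw [add_right_comm, map_add _ (_ + N), ← add_assoc, map_smul]
  exact add_mem hNq (Submodule.smul_mem _ _
    (on_mono (within_mono (far_mono (by linarith))) hH.bdry_mem))

theorem exists_localDeg_ne (hL : ∀ i, i ∈ L) (hK : ∀ i, i ∈ K) {u : κ → ℝ} (hu : ‖u‖ < 1)
    (hq : S.φ u ∈ ball p R) {U : Set (ι → ℝ)} (hU : U ∈ 𝓝 (S.φ u)) :
    ∃ ρ > 0, closedBall (S.φ u) ρ ⊆ U ∧ ∃ ε > 0, ∀ w G, S.IsFilling L K p R ε w G →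
      ∀ H, IsFundamental L (S.φ u) ρ ε H → ∀ e : ZMod 2, ∃ l ∈ H.support, ∃ v ∈ l,
        v ∉ S.carrier ∧ localDeg L w v ≠ e := by
  obtain ⟨ρ', hρ', hρU⟩ := Metric.nhds_basis_closedBall.mem_iff.1 hU
  have hqR := sub_pos.2 (mem_ball'.1 hq)
  set ρ := min ρ' (R - dist p (S.φ u))
  have hρ : 0 < ρ := lt_min hρ' hqR
  refine ⟨ρ, hρ, (closedBall_subset_closedBall (min_le_left _ _)).trans hρU, ?_⟩
  obtain ⟨η, h, hη, hηρ⟩ := ((S.eventually_push_φ_add_bdry_notMem hK hu (half_pos hρ)).and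
    (Ioc_mem_nhdsGT (half_pos hρ))).exists
  refine ⟨η / 2, half_pos hη, fun w G hw H hH e => ?_⟩
  by_contra! hcon
  obtain ⟨c, hc, hcY⟩ := hw.exists_push_φ_add_bdry_mem S hL (half_pos hη).le hρ
    (by linarith [min_le_right ρ' (R - dist p (S.φ u))]) hH hcon
  obtain ⟨δ, hG⟩ := hw.isFundamental
  rw [mul_div_cancel₀ η two_ne_zero] at hc hcY
  exact h δ G hG c hc (on_mono (Set.inter_subset_inter_right _ (within_mono
    (far_mono (by linarith)))) hcY)

end IsFilling

theorem exists_jumpsAt [Fintype ι] [Fintype κ] (hcard : Fintype.card ι = Fintype.card κ + 1)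
    {p : ι → ℝ} {R : ℝ} (hR : 0 < R) (hS : ∀ y ∈ far 0 1, S.φ y ∈ far p R) :
    ∃ f, IsLocConstOff f (ball p R) S.carrier ∧
      ∀ u, ‖u‖ < 1 → S.φ u ∈ ball p R → JumpsAt f S.carrier (S.φ u) := by
  set L := (Finset.univ : Finset ι).toList with hLdef
  set K := (Finset.univ : Finset κ).toList with hKdef
  have hL (i) : i ∈ L := by simp [hLdef]
  have hK (i) : i ∈ K := by simp [hKdef]
  have hLn : L.Nodup := Finset.nodup_toList _
  choose w G hw using fun n : ℕ => S.exists_isFilling hLn hL (K := K) (Finset.nodup_toList _)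
    (by simp [hLdef, hKdef, hcard]) hR hS (Nat.one_div_pos_of_nat (α := ℝ) (n := n))
  have hfill {ε : ℝ} (hε : 0 < ε) :
      ∀ᶠ n in Filter.hyperfilter ℕ, S.IsFilling L K p R ε (w n) (G n) := by
    have hlt := tendsto_one_div_add_atTop_nhds_zero_nat.eventually (gt_mem_nhds hε)
    exact Filter.Eventually.mono (Nat.hyperfilter_le_atTop hlt) fun n hn => (hw n).mono hn.le
  choose f hf using fun x => (Ultrafilter.eventually_exists_iff (f := Filter.hyperfilter ℕ)
    (P := fun e n => localDeg L (w n) x = e)).1 (.of_forall fun n => ⟨_, rfl⟩)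
  refine ⟨f, fun x hx => ?_, fun u hu hq U hU => ?_⟩
  · obtain ⟨s, hs, h⟩ := S.exists_localDeg_eq hL K hR hx
    filter_upwards [ball_mem_nhds x hs] with y hy
    obtain ⟨n, hn, hnx, hny⟩ := ((hfill hs).and ((hf x).and (hf y))).exists
    rw [← hnx, ← hny]
    exact h _ _ hn y hy
  · by_contra! hcon
    obtain ⟨ρ, hρ, hρU, ε, hε, h⟩ := S.exists_localDeg_ne hL hK hu hq hU
    obtain ⟨H, hH⟩ := exists_isFundamental hLn (S.φ u) hρ hε
    obtain ⟨n, hn, hnf⟩ := ((hfill hε).and (eventually_forall_mem_support hf H)).exists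
    have hmem {l} (hl : l ∈ H.support) {v} (hv : v ∈ l) : v ∈ U := hρU (hH.mem_within hl v hv)
    obtain ⟨l, hl, v, hv, hvD, -⟩ := h _ _ hn H hH 0
    obtain ⟨l', hl', v', hv', hvD', hne⟩ := h _ _ hn H hH (f v)
    exact hne ((hnf l' hl' v' hv').trans (hcon v' ⟨hmem hl' hv', hvD'⟩ v ⟨hmem hl hv, hvD⟩))

end Sheet

/-! ### Hypersurfaces in charts -/

section Charts

variable [Fintype κ]

theorem Sheet.exists_φ_eq_comp_clamp [Finite ι] {φ : (κ → ℝ) → ι → ℝ}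
    (hφ : ContinuousOn φ (closedBall 0 1)) (hinj : Set.InjOn φ (closedBall 0 1)) :
    ∃ S : Sheet ι κ, S.φ = φ ∘ clamp := by
  set C : Set (κ → ℝ) := closedBall 0 1
  have : CompactSpace C := isCompact_iff_compactSpace.1 (isCompact_closedBall _ _)
  have he : IsClosedEmbedding (C.domRestrict φ) :=
    (continuousOn_iff_continuous_domRestrict.1 hφ).isClosedEmbedding
      (Set.injOn_iff_injective.1 hinj)
  obtain ⟨r, hr⟩ := ContinuousMap.exists_extension' he
    (⟨Subtype.val, continuous_subtype_val⟩ : C(C, κ → ℝ))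
  exact ⟨⟨φ ∘ clamp, r, hφ.comp_continuous continuous_clamp clamp_mem_closedBall, r.continuous,
    fun y => congrFun hr ⟨clamp y, clamp_mem_closedBall y⟩,
    fun y => congrArg φ (clamp_of_mem_closedBall (clamp_mem_closedBall y))⟩, rfl⟩

theorem Sheet.φ_ne_of_mem_far (S : Sheet ι κ) {u y : κ → ℝ} (hu : ‖u‖ < 1) (hy : y ∈ far 0 1) :
    S.φ u ≠ S.φ y := by
  intro h
  have hr := congrArg S.r h
  rw [S.r_φ_of_mem_closedBall (mem_closedBall_zero_iff.2 hu.le), S.r_φ] at hr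
  have hy1 := (mem_far_iff one_pos).1 (clamp_mem_far (by simp) hy)
  rw [← hr, dist_zero_right] at hy1
  exact hu.not_ge hy1

variable {M : Type*} [TopologicalSpace M] {N : Set M}

/-- In the chart `e` of the ambient space and over the cube of centre `e p` and radius `R`, the
sheet `S` is the set `N`, with its rim outside that cube. -/
structure Sheet.Parametrizes [Fintype ι] (S : Sheet ι κ)
    (e : OpenPartialHomeomorph M (ι → ℝ)) (N : Set M) (p : M) (R : ℝ) : Prop where
  pos : 0 < R
  ball_subset : ball (e p) R ⊆ e.target
  φ_zero : S.φ 0 = e p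
  φ_mem_far : ∀ y ∈ far 0 1, S.φ y ∈ far (e p) R
  symm_mem : ∀ x ∈ S.carrier, e.symm x ∈ N
  exists_φ_eq : ∀ x ∈ ball (e p) R, e.symm x ∈ N → ∃ u, ‖u‖ < 1 ∧ S.φ u = x

theorem Sheet.exists_forall_eventually_φ_eq [Finite ι] (e : OpenPartialHomeomorph M (ι → ℝ))
    (ψ : OpenPartialHomeomorph N (κ → ℝ)) {p : N} (hp : (p : M) ∈ e.source) (hpψ : p ∈ ψ.source) :
    ∃ S : Sheet ι κ, S.φ 0 = e p ∧ (∀ x ∈ S.carrier, e.symm x ∈ N) ∧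
      ∀ᶠ q : N in 𝓝 p, ∃ u, ‖u‖ < 1 ∧ S.φ u = e q := by
  have hT : ψ.target ∩ ψ.symm ⁻¹' (Subtype.val ⁻¹' e.source) ∈ 𝓝 (ψ p) :=
    (ψ.isOpen_inter_preimage_symm (e.open_source.preimage continuous_subtype_val)).mem_nhds
      ⟨ψ.map_source hpψ, by rwa [Set.mem_preimage, ψ.left_inv hpψ]⟩
  obtain ⟨s, hs, hsT⟩ := Metric.nhds_basis_closedBall.mem_iff.1 hT
  set a : (κ → ℝ) → κ → ℝ := fun y => ψ p + s • y
  have haT : Set.MapsTo a (closedBall 0 1) _ := fun y hy => hsT <| by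
    rw [mem_closedBall, dist_self_add_left, norm_smul, Real.norm_of_nonneg hs.le]
    exact mul_le_of_le_one_right hs.le (mem_closedBall_zero_iff.1 hy)
  obtain ⟨S, hS⟩ := Sheet.exists_φ_eq_comp_clamp (φ := fun y => e (ψ.symm (a y)))
    (e.continuousOn.comp (continuous_subtype_val.comp_continuousOn (ψ.continuousOn_symm.comp
      (by fun_prop) fun y hy => (haT hy).1)) fun y hy => (haT hy).2)
    (fun y hy y' hy' h => smul_right_injective _ hs.ne' <| add_left_cancel <|
      ψ.symm.injOn (haT hy).1 (haT hy').1 <| Subtype.ext <| e.injOn (haT hy).2 (haT hy').2 h)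
  have hφ {y : κ → ℝ} (hy : y ∈ closedBall (0 : κ → ℝ) 1) : S.φ y = e (ψ.symm (a y)) := by
    rw [hS, Function.comp_apply, clamp_of_mem_closedBall hy]
  refine ⟨S, ?_, ?_, ?_⟩
  · simp only [hφ (mem_closedBall_self zero_le_one), a, smul_zero, add_zero, ψ.left_inv hpψ]
  · rw [S.carrier_eq]
    rintro _ ⟨y, hy, rfl⟩
    rw [hφ hy, e.left_inv (haT hy).2]
    exact (ψ.symm (a y)).2
  · filter_upwards [(ψ.isOpen_inter_preimage isOpen_ball).mem_nhds ⟨hpψ, mem_ball_self hs⟩]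
      with q hq
    have hu : ‖s⁻¹ • (ψ q - ψ p)‖ < 1 := by
      rw [norm_smul, norm_inv, Real.norm_of_nonneg hs.le, inv_mul_lt_one₀ hs, ← dist_eq_norm]
      exact hq.2
    refine ⟨_, hu, ?_⟩
    simp only [hφ (mem_closedBall_zero_iff.2 hu.le), a, smul_inv_smul₀ hs.ne', add_sub_cancel,
      ψ.left_inv hq.1]

variable [Fintype ι]

theorem Sheet.exists_parametrizes (e : OpenPartialHomeomorph M (ι → ℝ))
    (ψ : OpenPartialHomeomorph N (κ → ℝ)) {p : N} (hp : (p : M) ∈ e.source) (hpψ : p ∈ ψ.source) :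
    ∃ (S : Sheet ι κ) (R : ℝ), S.Parametrizes e N p R := by
  obtain ⟨S, hS0, hSN, hSφ⟩ := Sheet.exists_forall_eventually_φ_eq e ψ hp hpψ
  obtain ⟨O, hO, hOφ⟩ := mem_nhds_subtype N p _ |>.1 hSφ
  have hOe : e.target ∩ e.symm ⁻¹' O ∈ 𝓝 (e p) :=
    Filter.inter_mem (e.open_target.mem_nhds (e.map_source hp))
      (e.tendsto_symm hp |>.eventually_mem hO)
  obtain ⟨R, hR, hRO⟩ := Metric.mem_nhds_iff.1 hOe
  have hex (x) (hx : x ∈ ball (e p) R) (hxN : e.symm x ∈ N) : ∃ u, ‖u‖ < 1 ∧ S.φ u = x := by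
    obtain ⟨u, hu, hux⟩ := hOφ (show ⟨e.symm x, hxN⟩ ∈ Subtype.val ⁻¹' O from (hRO hx).2)
    exact ⟨u, hu, hux.trans (e.right_inv (hRO hx).1)⟩
  refine ⟨S, R, hR, fun x hx => (hRO hx).1, hS0, fun y hy => ?_, hSN, hex⟩
  refine (mem_far_iff hR).2 (not_lt.1 fun h => ?_)
  obtain ⟨u, hu, huy⟩ := hex _ h (hSN _ ⟨y, rfl⟩)
  exact S.φ_ne_of_mem_far hu hy huy

theorem IsLocConstOff.comp [TopologicalSpace Y] [TopologicalSpace Z] {f : Z → ZMod 2}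
    {V D : Set Z} (hf : IsLocConstOff f V D) {g : Y → Z} {V' D' : Set Y}
    (hg : ∀ y ∈ V' \ D', ContinuousAt g y) (hgV : Set.MapsTo g (V' \ D') (V \ D)) :
    IsLocConstOff (f ∘ g) V' D' :=
  fun y hy => (hg y hy).eventually (hf _ (hgV hy))

namespace Sheet.Parametrizes

variable {e : OpenPartialHomeomorph M (ι → ℝ)} {p : M} {R : ℝ} {S : Sheet ι κ}

theorem mem_carrier_iff (h : S.Parametrizes e N p R) {x : ι → ℝ} (hx : x ∈ ball (e p) R) :
    x ∈ S.carrier ↔ e.symm x ∈ N :=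
  ⟨h.symm_mem x, fun hN => (h.exists_φ_eq x hx hN).imp fun _ hu => hu.2⟩

theorem mapsTo (h : S.Parametrizes e N p R) (U : Set (ι → ℝ)) :
    Set.MapsTo e ((e.source ∩ e ⁻¹' (U ∩ ball (e p) R)) \ N) (U \ S.carrier) :=
  fun _ hx => ⟨hx.1.2.1, fun hS => hx.2 (e.left_inv hx.1.1 ▸ h.symm_mem _ hS)⟩

theorem mapsTo_symm (h : S.Parametrizes e N p R) (U : Set M) :
    Set.MapsTo e.symm ((e.symm ⁻¹' U ∩ ball (e p) R) \ S.carrier) (U \ N) :=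
  fun _ hx => ⟨hx.1.1, fun hN => hx.2 ((h.mem_carrier_iff hx.1.2).2 hN)⟩

theorem jumpsAt_comp (h : S.Parametrizes e N p R) {f : (ι → ℝ) → ZMod 2} {q : M}
    (hq : q ∈ e.source) (hqR : e q ∈ ball (e p) R) (hf : JumpsAt f S.carrier (e q)) :
    JumpsAt (f ∘ e) N q := by
  intro U hU
  obtain ⟨x, hx, y, hy, hne⟩ := hf _ (Filter.inter_mem ((e.tendsto_symm hq).eventually_mem hU)
    (isOpen_ball.mem_nhds hqR))
  refine ⟨e.symm x, h.mapsTo_symm U hx, e.symm y, h.mapsTo_symm U hy, ?_⟩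
  rwa [Function.comp_apply, Function.comp_apply, e.right_inv (h.ball_subset hx.1.2),
    e.right_inv (h.ball_subset hy.1.2)]

theorem inter_preimage_mem_nhds (h : S.Parametrizes e N p R) (hp : p ∈ e.source)
    {U : Set (ι → ℝ)} (hU : U ∈ 𝓝 (e p)) : e.source ∩ e ⁻¹' (U ∩ ball (e p) R) ∈ 𝓝 p :=
  Filter.inter_mem (e.open_source.mem_nhds hp)
    ((e.continuousAt hp).preimage_mem_nhds (Filter.inter_mem hU (ball_mem_nhds _ h.pos)))

theorem jumpsAt_comp_symm (h : S.Parametrizes e N p R) {f : M → ZMod 2} (hp : p ∈ e.source)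
    (hf : JumpsAt f N p) : JumpsAt (f ∘ e.symm) S.carrier (e p) := by
  intro U hU
  obtain ⟨x, hx, y, hy, hne⟩ := hf _ (h.inter_preimage_mem_nhds hp hU)
  refine ⟨e x, h.mapsTo U hx, e y, h.mapsTo U hy, ?_⟩
  rwa [Function.comp_apply, Function.comp_apply, e.left_inv hx.1.1, e.left_inv hy.1.1]

end Sheet.Parametrizes

/-- `f` tells the two sides of `N` apart on the open set `W`: it is locally constant off `N` and
takes both values near each point of `N`. -/
structure IsSideFunction (f : M → ZMod 2) (W N : Set M) : Prop where
  isOpen : IsOpen W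
  isLocConstOff : IsLocConstOff f W N
  jumpsAt : ∀ q ∈ W ∩ N, JumpsAt f N q

theorem exists_isSideFunction (hcard : Fintype.card ι = Fintype.card κ + 1)
    (e : OpenPartialHomeomorph M (ι → ℝ)) (ψ : OpenPartialHomeomorph N (κ → ℝ)) {p : N}
    (hp : (p : M) ∈ e.source) (hpψ : p ∈ ψ.source) :
    ∃ (W : Set M) (f : M → ZMod 2), (p : M) ∈ W ∧ IsSideFunction f W N := by
  obtain ⟨S, R, h⟩ := Sheet.exists_parametrizes e ψ hp hpψ
  obtain ⟨f, hf, hfj⟩ := S.exists_jumpsAt hcard h.pos h.φ_mem_far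
  refine ⟨e.source ∩ e ⁻¹' ball (e p) R, f ∘ e, ⟨hp, mem_ball_self h.pos⟩,
    e.isOpen_inter_preimage isOpen_ball, hf.comp (fun y hy => e.continuousAt hy.1.1) ?_,
    fun q hq => h.jumpsAt_comp hq.1.1 hq.1.2 ?_⟩
  · simpa only [Set.inter_self] using h.mapsTo (ball (e p) R)
  · obtain ⟨u, hu, hue⟩ := h.exists_φ_eq (e q) hq.1.2 (by rw [e.left_inv hq.1.1]; exact hq.2)
    rw [← hue]
    exact hfj u hu (hue ▸ hq.1.2)

theorem IsSideFunction.exists_eventually_sub_eq (hcard : Fintype.card ι = Fintype.card κ + 1)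
    (e : OpenPartialHomeomorph M (ι → ℝ)) (ψ : OpenPartialHomeomorph N (κ → ℝ)) {p : N}
    (hp : (p : M) ∈ e.source) (hpψ : p ∈ ψ.source) {f g : M → ZMod 2} {V W : Set M}
    (hf : IsSideFunction f V N) (hg : IsSideFunction g W N) (hpVW : (p : M) ∈ V ∩ W) :
    ∃ c, ∀ᶠ y in 𝓝[Nᶜ] (p : M), f y - g y = c := by
  obtain ⟨S, R, h⟩ := Sheet.exists_parametrizes e ψ hp hpψ
  have hjump {f : M → ZMod 2} {V : Set M} (hf : IsSideFunction f V N) (hpV : (p : M) ∈ V) :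
      JumpsAt (f ∘ e.symm) S.carrier (S.φ 0) := by
    rw [h.φ_zero]
    exact h.jumpsAt_comp_symm hp (hf.jumpsAt p ⟨hpV, p.2⟩)
  set V' := e.symm ⁻¹' (V ∩ W) ∩ ball (e p) R
  have hV' : V' ∈ 𝓝 (S.φ 0) := by
    rw [h.φ_zero]
    exact Filter.inter_mem ((e.tendsto_symm hp).eventually_mem
      ((hf.isOpen.inter hg.isOpen).mem_nhds hpVW)) (ball_mem_nhds _ h.pos)
  have hcont (x) (hx : x ∈ V' \ S.carrier) : ContinuousAt e.symm x :=
    e.continuousAt_symm (h.ball_subset hx.1.2)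
  have hmaps : Set.MapsTo e.symm (V' \ S.carrier) ((V ∩ W) \ N) := h.mapsTo_symm (V ∩ W)
  obtain ⟨U, hU, hUc⟩ := S.exists_add_eq hcard (by simp) hV'
    (hf.isLocConstOff.comp hcont fun x hx => ⟨(hmaps hx).1.1, (hmaps hx).2⟩)
    (hg.isLocConstOff.comp hcont fun x hx => ⟨(hmaps hx).1.2, (hmaps hx).2⟩)
    (hjump hf hpVW.1) (hjump hg hpVW.2)
  have hUp := h.inter_preimage_mem_nhds hp (h.φ_zero ▸ hU)
  obtain ⟨z, hz, -⟩ := hf.jumpsAt p ⟨hpVW.1, p.2⟩ _ hUp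
  refine ⟨f z + g z, ?_⟩
  filter_upwards [nhdsWithin_le_nhds hUp, self_mem_nhdsWithin] with y hy hyN
  have hyz := hUc _ (h.mapsTo U ⟨hy, hyN⟩) _ (h.mapsTo U hz)
  rw [ZModModule.sub_eq_add]
  simpa only [Function.comp_apply, e.left_inv hy.1, e.left_inv hz.1.1] using hyz

end Charts

end TupleChain

/-! ### Gluing over a simply connected space -/

open TupleChain Topology

section Glue

variable {M I A : Type*} [TopologicalSpace M] [AddCommGroup A] [TopologicalSpace A]
  [DiscreteTopology A] {W : I → Set M}

/-- The covering space with fibre `A` glued from trivial ones over the sets of an open cover `W` by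
means of the cocycle `c` of locally constant functions. -/
def cocycleCore (hW : ∀ i, IsOpen (W i)) (idx : M → I) (hidx : ∀ x, x ∈ W (idx x))
    (c : I → I → M → A) (hc : ∀ i j, ContinuousOn (c i j) (W i ∩ W j))
    (hcoc : ∀ i j k, ∀ x ∈ W i ∩ W j ∩ W k, c i j x + c j k x = c i k x) :
    FiberBundleCore I M A where
  baseSet := W
  isOpen_baseSet := hW
  indexAt := idx
  mem_baseSet_at := hidx
  coordChange i j x v := v + c i j x
  coordChange_self i x hx v := by
    rw [left_eq_add.1 (hcoc i i i x ⟨⟨hx, hx⟩, hx⟩).symm, add_zero]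
  continuousOn_coordChange i j :=
    continuousOn_snd.add ((hc i j).comp continuousOn_fst fun _ hp => hp.1)
  coordChange_comp i j k x hx v := by rw [add_assoc, hcoc i j k x hx]

theorem exists_continuousOn_of_cocycle [SimplyConnectedSpace M] [LocallyPathConnectedSpace M]
    (hW : ∀ i, IsOpen (W i)) (hcover : ∀ x, ∃ i, x ∈ W i) {c : I → I → M → A}
    (hc : ∀ i j, ContinuousOn (c i j) (W i ∩ W j))
    (hcoc : ∀ i j k, ∀ x ∈ W i ∩ W j ∩ W k, c i j x + c j k x = c i k x) :
    ∃ v : I → M → A, (∀ i, ContinuousOn (v i) (W i)) ∧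
      ∀ i j, ∀ x ∈ W i ∩ W j, v j x = v i x + c i j x := by
  choose idx hidx using hcover
  let Z := cocycleCore hW idx hidx c hc hcoc
  have hcov : IsCoveringMap Z.proj := FiberBundle.isCoveringMap (F := A) (E := Z.Fiber)
  obtain ⟨x₀⟩ : Nonempty M := inferInstance
  obtain ⟨s, ⟨-, hs⟩, -⟩ := hcov.existsUnique_continuousMap_lifts (ContinuousMap.id M) x₀
    (⟨x₀, (0 : A)⟩ : Z.TotalSpace) rfl
  replace hs (x) : (s x).1 = x := congrFun hs x
  let v : M → A := fun x => (s x).2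
  refine ⟨fun i x => v x + c (idx x) i x, fun i x hx => ?_, fun i j x hx => ?_⟩
  · have hsx : s x ∈ (Z.localTriv i).source := by
      rw [FiberBundleCore.mem_localTriv_source]
      exact (hs x).symm ▸ hx
    have hcont : ContinuousAt (fun y => (Z.localTriv i (s y)).2) x := continuousAt_snd.comp
      (((Z.localTriv i).toOpenPartialHomeomorph.continuousAt hsx).comp s.continuous.continuousAt)
    refine (hcont.congr (.of_forall fun y => ?_)).continuousWithinAt
    change v y + c (idx (s y).1) i (s y).1 = v y + c (idx y) i y
    rw [hs]
  · rw [add_assoc, hcoc _ i j x ⟨⟨hidx x, hx.1⟩, hx.2⟩]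

theorem exists_forall_eventually_sub_eq [SimplyConnectedSpace M] [LocallyPathConnectedSpace M]
    {U : Set M} (hU : IsOpen U) (hUd : Dense U) (hW : ∀ i, IsOpen (W i))
    (hcover : ∀ x, ∃ i, x ∈ W i) {f : I → M → A}
    (hf : ∀ i j, ∀ x ∈ W i ∩ W j, ∃ c, ∀ᶠ y in 𝓝[U] x, f i y - f j y = c) :
    ∃ F : M → A, ∀ i, ∀ x ∈ W i, ∃ c, ∀ᶠ y in 𝓝[U] x, F y - f i y = c := by
  have hne (x) : (𝓝[U] x).NeBot := mem_closure_iff_nhdsWithin_neBot.1 (hUd x)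
  choose! c hc using hf
  have hunique {i j x} (hx : x ∈ W i ∩ W j) {a} (ha : ∀ᶠ y in 𝓝[U] x, f i y - f j y = a) :
      c i j x = a := by
    obtain ⟨y, hyc, hya⟩ := ((hc i j x hx).and ha).exists
    exact hyc.symm.trans hya
  have hcont (i j) : ContinuousOn (c i j) (W i ∩ W j) := fun x hx => by
    refine (continuousAt_const.congr (f := fun _ => c i j x) ?_).continuousWithinAt
    filter_upwards [eventually_nhds_nhdsWithin.2 (hc i j x hx),
      ((hW i).inter (hW j)).mem_nhds hx] with y hy hyW
    exact (hunique hyW hy).symm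
  have hcoc (i j k x) (hx : x ∈ W i ∩ W j ∩ W k) : c i j x + c j k x = c i k x := by
    refine (hunique ⟨hx.1.1, hx.2⟩ ?_).symm
    filter_upwards [hc i j x hx.1, hc j k x ⟨hx.1.2, hx.2⟩] with y hij hjk
    rw [← hij, ← hjk, sub_add_sub_cancel]
  obtain ⟨v, hv, hvc⟩ := exists_continuousOn_of_cocycle hW hcover hcont hcoc
  choose idx hidx using hcover
  refine ⟨fun x => f (idx x) x + v (idx x) x, fun i x hx => ⟨v i x, ?_⟩⟩
  filter_upwards [nhdsWithin_le_nhds (((hv i).continuousAt ((hW i).mem_nhds hx)).eventually_mem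
    ((isOpen_discrete {v i x}).mem_nhds rfl)), nhdsWithin_le_nhds ((hW i).mem_nhds hx),
    self_mem_nhdsWithin] with y hyv hyW hyU
  have hyc := hc (idx y) i y ⟨hidx y, hyW⟩
  rw [hU.nhdsWithin_eq hyU] at hyc
  rw [← show v i y = v i x from hyv, hvc (idx y) i y ⟨hidx y, hyW⟩, ← hyc.self_of_nhds]
  abel

end Glue

/-! ### Separation -/

section Separation

variable {M : Type*} [TopologicalSpace M] {N : Set M}

theorem isSideFunction_zero (hN : IsClosed N) : IsSideFunction 0 Nᶜ N where
  isOpen := hN.isOpen_compl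
  isLocConstOff _ _ := .of_forall fun _ => rfl
  jumpsAt _ hq := absurd hq.2 hq.1

theorem dense_compl_of_jumpsAt (h : ∀ p ∈ N, ∃ f, JumpsAt f N p) : Dense Nᶜ := by
  refine interior_eq_empty_iff_dense_compl.1 (Set.eq_empty_of_forall_notMem fun p hp => ?_)
  obtain ⟨f, hf⟩ := h p (interior_subset hp)
  obtain ⟨x, hx, -⟩ := hf _ (mem_interior_iff_mem_nhds.1 hp)
  exact hx.2 hx.1

theorem exists_isLocConstOff_forall_eventually_sub_eq [SimplyConnectedSpace M]
    [LocallyPathConnectedSpace M] (hN : IsClosed N)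
    (hside : ∀ p ∈ N, ∃ W f, p ∈ W ∧ IsSideFunction f W N)
    (hsub : ∀ p ∈ N, ∀ f g V W, IsSideFunction f V N → IsSideFunction g W N → p ∈ V ∩ W →
      ∃ c, ∀ᶠ y in 𝓝[Nᶜ] p, f y - g y = c) :
    ∃ F, IsLocConstOff F Set.univ N ∧ ∀ f W, IsSideFunction f W N → ∀ p ∈ W,
      ∃ c, ∀ᶠ y in 𝓝[Nᶜ] p, F y - f y = c := by
  have hdense : Dense Nᶜ := dense_compl_of_jumpsAt fun p hp => by
    obtain ⟨W, f, hpW, hf⟩ := hside p hp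
    exact ⟨f, hf.jumpsAt p ⟨hpW, hp⟩⟩
  have hcover (x) : ∃ a : {a : (M → ZMod 2) × Set M // IsSideFunction a.1 a.2 N}, x ∈ a.1.2 := by
    by_cases hxN : x ∈ N
    · obtain ⟨W, f, hxW, hf⟩ := hside x hxN
      exact ⟨⟨(f, W), hf⟩, hxW⟩
    · exact ⟨⟨(0, Nᶜ), isSideFunction_zero hN⟩, hxN⟩
  obtain ⟨F, hF⟩ := exists_forall_eventually_sub_eq hN.isOpen_compl hdense (f := fun a => a.1.1)
    (fun a => a.2.isOpen) hcover fun a b x hx => by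
      by_cases hxN : x ∈ N
      · exact hsub x hxN _ _ _ _ a.2 b.2 hx
      · refine ⟨a.1.1 x - b.1.1 x, nhdsWithin_le_nhds ?_⟩
        filter_upwards [a.2.isLocConstOff x ⟨hx.1, hxN⟩, b.2.isLocConstOff x ⟨hx.2, hxN⟩]
          with y ha hb
        rw [ha, hb]
  refine ⟨F, fun x hx => ?_, fun f W hf => hF ⟨(f, W), hf⟩⟩
  obtain ⟨c, hc⟩ := hF ⟨(0, Nᶜ), isSideFunction_zero hN⟩ x hx.2
  rw [hN.isOpen_compl.nhdsWithin_eq hx.2] at hc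
  simp only [Pi.zero_apply, sub_zero] at hc
  exact hc.mono fun y hy => hy.trans hc.self_of_nhds.symm

theorem not_isPreconnected_compl_of_jumpsAt {F f : M → ZMod 2} (hF : IsLocConstOff F Set.univ N)
    {p : M} (hf : JumpsAt f N p) (hsub : ∃ c, ∀ᶠ y in 𝓝[Nᶜ] p, F y - f y = c) :
    ¬ IsPreconnected Nᶜ := by
  intro hconn
  obtain ⟨c, hc⟩ := hsub
  obtain ⟨x, hx, y, hy, hne⟩ := hf _ (eventually_nhdsWithin_iff.1 hc)
  have hFxy : F x = F y :=
    hF.eq_of_isPreconnected hconn (fun z hz => ⟨Set.mem_univ z, hz⟩) hx.2 hy.2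
  have hxy : F x - f x = F y - f y := (hx.1 hx.2).trans (hy.1 hy.2).symm
  rw [hFxy] at hxy
  exact hne (sub_right_injective hxy)

end Separation

theorem surface_separates_general {M : Type*} [TopologicalSpace M] [SimplyConnectedSpace M] {n : ℕ}
    [ChartedSpace (EuclideanSpace ℝ (Fin (n + 1))) M] {N : Set M}
    [ChartedSpace (EuclideanSpace ℝ (Fin n)) N] (hNne : N.Nonempty) (hN : IsClosed N) :
    ¬ IsPreconnected Nᶜ := by
  have := ChartedSpace.locallyPathConnectedSpace (EuclideanSpace ℝ (Fin (n + 1))) M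
  let e (p : M) := (chartAt (EuclideanSpace ℝ (Fin (n + 1))) p).transHomeomorph
    (PiLp.homeomorph 2 _)
  let ψ (p : N) := (chartAt (EuclideanSpace ℝ (Fin n)) p).transHomeomorph (PiLp.homeomorph 2 _)
  have hside (p) (hp : p ∈ N) : ∃ W f, p ∈ W ∧ IsSideFunction f W N :=
    exists_isSideFunction (by simp) (e p) (ψ ⟨p, hp⟩) (mem_chart_source _ p)
      (mem_chart_source _ (⟨p, hp⟩ : N))
  obtain ⟨F, hF, hFf⟩ := exists_isLocConstOff_forall_eventually_sub_eq hN hside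
    fun p hp f g V W hf hg => hf.exists_eventually_sub_eq (by simp) (e p) (ψ ⟨p, hp⟩)
      (mem_chart_source _ p) (mem_chart_source _ (⟨p, hp⟩ : N)) hg
  obtain ⟨p, hp⟩ := hNne
  obtain ⟨W, f, hpW, hf⟩ := hside p hp
  exact not_isPreconnected_compl_of_jumpsAt hF (hf.jumpsAt p ⟨hpW, hp⟩) (hFf f W hf p hpW)

end

/-- A closed embedded surface in a simply connected closed 3-manifold
separates it: the complement of the surface is disconnected. -/
theorem surface_separates
    (M : Type*) [TopologicalSpace M] [Nonempty M] [T2Space M]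
    [SecondCountableTopology M] [ConnectedSpace M]
    [ChartedSpace (EuclideanSpace ℝ (Fin 3)) M]
    [CompactSpace M] [SimplyConnectedSpace M]
    (N : Set M) (hNne : N.Nonempty) (hNclosed : IsClosed N)
    (hNcompact : IsCompact N) (hNconn : ConnectedSpace ↥N)
    (hNchart : ChartedSpace (EuclideanSpace ℝ (Fin 2)) ↥N) :
    ¬ IsConnected ((Set.univ \ N : Set M)) := by
  rw [← Set.compl_eq_univ_sdiff]
  exact fun h => surface_separates_general (n := 2) hNne hNclosed h.isPreconnected
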